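/- arXiv:1411.5872 — 2 statements merged into one kernel-verified Lean document; each statement's English description precedes it below -/
import Mathlib

section
/- Let q ∈ C²(ℝ) with q(x) > 0 for all x ∈ ℝ, q even, and q'(x) ≥ 0 for all x ≥ 0. Fix d ∈ (0, c) where c = ∫_ℝ q(t) dt ∈ (0, +∞]. Let ā > 0 be the unique positive number with ∫_{−ā}^{ā} q(t) dt = d; if c < +∞ let a₊ be defined by ∫_{a₊}^{+∞} q(t) dt = d, otherwise a₊ = +∞. For a < a₊ let b(a) be the unique real with ∫_a^{b(a)} q(t) dt = d and set μ₁(a) := μ₁((a, b(a)); q). Then: (a) μ₁ is nondecreasing on [−ā, a₊), i.e. μ₁(a₁) ≤ μ₁(a₂) whenever −ā ≤ a₁ ≤ a₂ < a₊; (b) if moreover q is not constant on the interval (a₁, b(a₁)) for some a₁ ∈ (−ā, a₊), then μ₁(a₁) < μ₁(a₂) for every a₂ with a₁ < a₂ < a₊. -/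
/-!
In the mass coordinate `s = ∫ q` the interval `(a, b(a))` becomes `(α, α + d)`, of fixed length `d`,
and `μ₁` becomes the first Neumann eigenvalue of `-(v' / g)' = μ v`, where `g = 1 / q²` is even and
decreasing in `|s|`. The flux `f = v' / g` then solves the Dirichlet problem `-f'' = μ g f`, so
`μ₁` is also the minimum of `∫ f'² / ∫ g f²` over `f` vanishing at `α` and `α + d`.

To compare `(α₁, α₁ + d)` with `(α₂, α₂ + d)`, where `-d / 2 ≤ α₁ ≤ α₂`, polarize a trial function
of the second interval about the midpoint `σ` of the two centres, moving the larger of each pair of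
values to the left. Dirichlet energy is preserved, the `g`-mass does not decrease because `g` is at
least as large on the left, and the polarized function lives on the first interval. If the two
eigenvalues agree, the polarization of a minimizer is again a minimizer, so uniqueness for the
Euler-Lagrange equation makes it the reflection of the original one about `σ`. Hence `g` is
symmetric about `σ` as well as about `0`, and monotonicity forces it to be constant.
-/

open MeasureTheory Set

/-- The first nontrivial Neumann eigenvalue of `-(u' q)' = μ u q` on `(a,b)`,
defined variationally as the infimum of the Rayleigh quotient over smooth
trial functions with weighted mean zero. -/
noncomputable def neumannMu1 (q : ℝ → ℝ) (a b : ℝ) : ℝ :=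
  sInf { μ : ℝ | ∃ u : ℝ → ℝ, ContDiff ℝ 1 u ∧
    0 < (∫ x in a..b, (u x) ^ 2 * q x) ∧
    (∫ x in a..b, u x * q x) = 0 ∧
    μ = (∫ x in a..b, (deriv u x) ^ 2 * q x) / ∫ x in a..b, (u x) ^ 2 * q x }

section Calculus

theorem sq_intervalIntegral_mul_le {f h : ℝ → ℝ} {a b : ℝ} (hab : a ≤ b)
    (hf : IntervalIntegrable (fun x => f x ^ 2) volume a b)
    (hfh : IntervalIntegrable (fun x => f x * h x) volume a b)
    (hh : IntervalIntegrable (fun x => h x ^ 2) volume a b) :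
    (∫ x in a..b, f x * h x) ^ 2 ≤ (∫ x in a..b, f x ^ 2) * ∫ x in a..b, h x ^ 2 := by
  have quadratic_nonneg : ∀ t : ℝ, 0 ≤ (∫ x in a..b, f x ^ 2) * (t * t) +
      2 * (∫ x in a..b, f x * h x) * t + ∫ x in a..b, h x ^ 2 := fun t => by
    have expand : ∫ x in a..b, (t * f x + h x) ^ 2 = (∫ x in a..b, f x ^ 2) * (t * t) +
        2 * (∫ x in a..b, f x * h x) * t + ∫ x in a..b, h x ^ 2 := by
      rw [mul_right_comm, mul_comm, ← intervalIntegral.integral_const_mul,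
        ← intervalIntegral.integral_const_mul,
        ← intervalIntegral.integral_add (hf.const_mul _) (hfh.const_mul _),
        ← intervalIntegral.integral_add ((hf.const_mul _).add (hfh.const_mul _)) hh]
      congr 1; ext x; ring
    rw [← expand]
    exact intervalIntegral.integral_nonneg hab fun x _ => sq_nonneg _
  have := discrim_le_zero quadratic_nonneg
  rw [discrim] at this
  linarith

theorem sq_intervalIntegral_le {f : ℝ → ℝ} {a b : ℝ} (hab : a ≤ b)
    (hf : IntervalIntegrable f volume a b)
    (hf2 : IntervalIntegrable (fun x => f x ^ 2) volume a b) :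
    (∫ x in a..b, f x) ^ 2 ≤ (b - a) * ∫ x in a..b, f x ^ 2 := by
  simpa using sq_intervalIntegral_mul_le (f := fun _ => 1) (h := f) hab (by simp)
    (by simpa using hf) hf2

theorem intervalIntegral_eq_of_eq_zero_of_notMem_Ioo {h : ℝ → ℝ} {a b α β : ℝ}
    (h0 : ∀ s, s ∉ Ioo α β → h s = 0) (ha : a ≤ α) (hb : β ≤ b) :
    ∫ s in a..b, h s = ∫ s in α..β, h s := by
  have hsupp : Function.support h ⊆ Ioo α β := Function.support_subset_iff'.2 h0
  rw [intervalIntegral.integral_eq_integral_of_support_subset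
      (hsupp.trans ((Ioo_subset_Ioo ha hb).trans Ioo_subset_Ioc_self)),
    intervalIntegral.integral_eq_integral_of_support_subset (hsupp.trans Ioo_subset_Ioc_self)]

theorem intervalIntegral_fold {h : ℝ → ℝ} {a b σ : ℝ} (hab : a + b = 2 * σ)
    (hi : ∀ c d, IntervalIntegrable h volume c d) :
    ∫ s in a..b, h s = ∫ s in a..σ, (h s + h (2 * σ - s)) := by
  obtain rfl : b = 2 * σ - a := by linarith
  have reflected : ∫ s in a..σ, h (2 * σ - s) = ∫ s in σ..(2 * σ - a), h s := by
    rw [intervalIntegral.integral_comp_sub_left, show 2 * σ - σ = σ by ring]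
  have hi' : IntervalIntegrable (fun s => h (2 * σ - s)) volume a σ := by
    simpa using (hi (2 * σ - a) (2 * σ - σ)).comp_sub_left (2 * σ)
  rw [intervalIntegral.integral_add (hi _ _) hi', reflected,
    intervalIntegral.integral_add_adjacent_intervals (hi _ _) (hi _ _)]

theorem intervalIntegrable_deriv_sq_of_lipschitzWith {f : ℝ → ℝ} {K : NNReal}
    (hf : LipschitzWith K f) (a b : ℝ) :
    IntervalIntegrable (fun s => deriv f s ^ 2) volume a b := by
  refine (intervalIntegrable_const (c := (K : ℝ) ^ 2)).mono_fun
    ((measurable_deriv f).pow_const 2).aestronglyMeasurable (.of_forall fun s => ?_)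
  have := norm_deriv_le_of_lipschitz (x₀ := s) hf
  simp only [norm_pow, NNReal.norm_eq]
  gcongr

theorem deriv_abs_sq_le {f : ℝ → ℝ} {s : ℝ} (hf : DifferentiableAt ℝ f s) :
    deriv (fun x => |f x|) s ^ 2 ≤ deriv f s ^ 2 := by
  by_cases h0 : f s = 0
  · have isLocalMin : IsLocalMin (fun x => |f x|) s := .of_forall fun x => by simp [h0]
    rw [isLocalMin.deriv_eq_zero, zero_pow two_ne_zero]
    exact sq_nonneg _
  · have hderiv := ((hasDerivAt_abs h0).comp s hf.hasDerivAt).deriv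
    rw [show (fun x => |f x|) = abs ∘ f from rfl, hderiv, mul_pow]
    rcases lt_or_gt_of_ne h0 with h | h <;> simp [h]

theorem deriv_max_sq_add_deriv_min_sq_le {f h : ℝ → ℝ} {s : ℝ} (hf : DifferentiableAt ℝ f s)
    (hh : DifferentiableAt ℝ h s) (hfh : DifferentiableAt ℝ (fun x => |f x - h x|) s) :
    deriv (fun x => max (f x) (h x)) s ^ 2 + deriv (fun x => min (f x) (h x)) s ^ 2 ≤
      deriv f s ^ 2 + deriv h s ^ 2 := by
  have hmax : (fun x => max (f x) (h x)) = fun x => (f x + h x + |f x - h x|) / 2 := by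
    ext x; linarith [max_add_min (f x) (h x), max_sub_min_eq_abs' (f x) (h x)]
  have hmin : (fun x => min (f x) (h x)) = fun x => (f x + h x - |f x - h x|) / 2 := by
    ext x; linarith [max_add_min (f x) (h x), max_sub_min_eq_abs' (f x) (h x)]
  have deriv_sub_sq : deriv (fun x => |f x - h x|) s ^ 2 ≤ (deriv f s - deriv h s) ^ 2 := by
    rw [← deriv_fun_sub hf hh]
    exact deriv_abs_sq_le (hf.sub hh)
  rw [hmax, hmin,
    (((hf.hasDerivAt.fun_add hh.hasDerivAt).fun_add hfh.hasDerivAt).div_const 2).deriv,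
    (((hf.hasDerivAt.fun_add hh.hasDerivAt).fun_sub hfh.hasDerivAt).div_const 2).deriv]
  nlinarith

end Calculus

section DirichletTrial

/-- Nonnegative Lipschitz functions supported in `[α, β]`: the trial functions of the Dirichlet
problem dual to the Neumann problem. They are defined on all of `ℝ`, so that one function can be
reflected and compared on several intervals. -/
structure IsDirichletTrial (α β : ℝ) (f : ℝ → ℝ) : Prop where
  lipschitz : ∃ K, LipschitzWith K f
  nonneg : ∀ s, 0 ≤ f s
  eq_zero : ∀ s, s ∉ Ioo α β → f s = 0

namespace IsDirichletTrial

variable {α β : ℝ} {f v : ℝ → ℝ}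

theorem continuous (hf : IsDirichletTrial α β f) : Continuous f :=
  let ⟨_, hK⟩ := hf.lipschitz
  hK.continuous

theorem intervalIntegrable_deriv_sq (hf : IsDirichletTrial α β f) (a b : ℝ) :
    IntervalIntegrable (fun s => deriv f s ^ 2) volume a b :=
  let ⟨_, hK⟩ := hf.lipschitz
  intervalIntegrable_deriv_sq_of_lipschitzWith hK a b

theorem absolutelyContinuousOnInterval (hf : IsDirichletTrial α β f) (a b : ℝ) :
    AbsolutelyContinuousOnInterval f a b :=
  let ⟨_, hK⟩ := hf.lipschitz
  hK.lipschitzOnWith.absolutelyContinuousOnInterval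

theorem eq_zero_left (hf : IsDirichletTrial α β f) : f α = 0 :=
  hf.eq_zero α fun h => lt_irrefl _ h.1

theorem eq_zero_right (hf : IsDirichletTrial α β f) : f β = 0 :=
  hf.eq_zero β fun h => lt_irrefl _ h.2

theorem deriv_eq_zero (hf : IsDirichletTrial α β f) {s : ℝ} (hs : s ∉ Ioo α β) :
    deriv f s = 0 :=
  IsLocalMin.deriv_eq_zero (.of_forall fun x => (hf.eq_zero s hs).trans_le (hf.nonneg x))

theorem integral_deriv_sq (hf : IsDirichletTrial α β f) {a b : ℝ} (ha : a ≤ α) (hb : β ≤ b) :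
    ∫ s in a..b, deriv f s ^ 2 = ∫ s in α..β, deriv f s ^ 2 :=
  intervalIntegral_eq_of_eq_zero_of_notMem_Ioo
    (fun s hs => by rw [hf.deriv_eq_zero hs, zero_pow two_ne_zero]) ha hb

theorem integral_sq_mul (hf : IsDirichletTrial α β f) (g : ℝ → ℝ) {a b : ℝ} (ha : a ≤ α)
    (hb : β ≤ b) : ∫ s in a..b, f s ^ 2 * g s = ∫ s in α..β, f s ^ 2 * g s :=
  intervalIntegral_eq_of_eq_zero_of_notMem_Ioo
    (fun s hs => by rw [hf.eq_zero s hs, zero_pow two_ne_zero, zero_mul]) ha hb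

theorem const_mul (hf : IsDirichletTrial α β f) {c : ℝ} (hc : 0 ≤ c) :
    IsDirichletTrial α β fun s => c * f s where
  lipschitz := by
    obtain ⟨K, hK⟩ := hf.lipschitz
    exact ⟨_, (lipschitzWith_smul c).comp hK⟩
  nonneg s := mul_nonneg hc (hf.nonneg s)
  eq_zero s hs := by rw [hf.eq_zero s hs, mul_zero]

theorem integral_deriv_sq_nonneg (hf : IsDirichletTrial α β f) :
    0 ≤ ∫ s in α..β, deriv f s ^ 2 := by
  rw [← hf.integral_deriv_sq (min_le_left α β) (le_max_right α β)]
  exact intervalIntegral.integral_nonneg min_le_max fun _ _ => sq_nonneg _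

theorem sq_sub_le (hf : IsDirichletTrial α β f) (x y : ℝ) :
    (f x - f y) ^ 2 ≤ |x - y| * ∫ s in α..β, deriv f s ^ 2 := by
  wlog hxy : y ≤ x generalizing x y
  · rw [← neg_sub, neg_sq, abs_sub_comm]
    exact this y x (le_of_not_ge hxy)
  have hac := hf.absolutelyContinuousOnInterval y x
  calc (f x - f y) ^ 2 = (∫ s in y..x, deriv f s) ^ 2 := by rw [hac.integral_deriv_eq_sub]
    _ ≤ (x - y) * ∫ s in y..x, deriv f s ^ 2 :=
        sq_intervalIntegral_le hxy hac.intervalIntegrable_deriv (hf.intervalIntegrable_deriv_sq _ _)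
    _ ≤ (x - y) * ∫ s in (min y α)..(max x β), deriv f s ^ 2 := by
        refine mul_le_mul_of_nonneg_left ?_ (sub_nonneg.2 hxy)
        exact intervalIntegral.integral_mono_interval (min_le_left _ _) hxy (le_max_left _ _)
          (.of_forall fun _ => sq_nonneg _) (hf.intervalIntegrable_deriv_sq _ _)
    _ = |x - y| * ∫ s in α..β, deriv f s ^ 2 := by
        rw [hf.integral_deriv_sq (min_le_right _ _) (le_max_right _ _),
          abs_of_nonneg (sub_nonneg.2 hxy)]

theorem integral_deriv_sq_pos (hf : IsDirichletTrial α β f) {g : ℝ → ℝ}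
    (hpos : 0 < ∫ s in α..β, f s ^ 2 * g s) : 0 < ∫ s in α..β, deriv f s ^ 2 := by
  refine hf.integral_deriv_sq_nonneg.lt_of_ne fun energy_eq_zero => hpos.ne' ?_
  have f_eq_zero : ∀ s, f s ^ 2 = 0 := fun s => by
    refine le_antisymm ?_ (sq_nonneg _)
    simpa only [← energy_eq_zero, mul_zero, hf.eq_zero_left, sub_zero] using hf.sq_sub_le s α
  simp only [f_eq_zero, zero_mul, intervalIntegral.integral_zero]

theorem intervalIntegrable_deriv_mul (hf : IsDirichletTrial α β f) (hv : Continuous v) (a b : ℝ) :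
    IntervalIntegrable (fun s => deriv f s * v s) volume a b :=
  (hf.absolutelyContinuousOnInterval a b).intervalIntegrable_deriv.mul_continuousOn hv.continuousOn

theorem intervalIntegrable_deriv_add_mul_sq (hf : IsDirichletTrial α β f) (hv : Continuous v)
    (c a b : ℝ) : IntervalIntegrable (fun s => (deriv f s + c * v s) ^ 2) volume a b := by
  have : (fun s => (deriv f s + c * v s) ^ 2) =
      fun s => deriv f s ^ 2 + 2 * c * (deriv f s * v s) + c ^ 2 * v s ^ 2 := by
    ext s; ring
  rw [this]
  exact ((hf.intervalIntegrable_deriv_sq a b).add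
    ((hf.intervalIntegrable_deriv_mul hv a b).const_mul _)).add
    (((hv.pow 2).intervalIntegrable a b).const_mul _)

theorem integral_deriv_add_mul_sq (hf : IsDirichletTrial α β f) (hv : Continuous v) (c : ℝ) :
    ∫ s in α..β, (deriv f s + c * v s) ^ 2 = (∫ s in α..β, deriv f s ^ 2) +
      2 * c * (∫ s in α..β, deriv f s * v s) + c ^ 2 * ∫ s in α..β, v s ^ 2 := by
  have hfv := hf.intervalIntegrable_deriv_mul hv α β
  have hf2 := hf.intervalIntegrable_deriv_sq α β
  have hv2 : IntervalIntegrable (fun s => v s ^ 2) volume α β :=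
    (hv.pow 2).intervalIntegrable α β
  rw [← intervalIntegral.integral_const_mul, ← intervalIntegral.integral_const_mul,
    ← intervalIntegral.integral_add hf2 (hfv.const_mul _),
    ← intervalIntegral.integral_add (hf2.add (hfv.const_mul _)) (hv2.const_mul _)]
  congr 1; ext s; ring

end IsDirichletTrial

theorem exists_isDirichletTrial_integral_pos {g : ℝ → ℝ} {α β : ℝ} (hg : Continuous g)
    (hg0 : ∀ s, 0 < g s) (hαβ : α < β) :
    ∃ f, IsDirichletTrial α β f ∧ 0 < ∫ s in α..β, f s ^ 2 * g s := by
  set f : ℝ → ℝ := fun s => Metric.infDist s (Ioo α β)ᶜ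
  have hf : IsDirichletTrial α β f := ⟨⟨1, Metric.lipschitz_infDist_pt _⟩,
    fun _ => Metric.infDist_nonneg, fun _ hs => Metric.infDist_zero_of_mem hs⟩
  have hpos : ∀ s ∈ Ioo α β, 0 < f s := fun s hs =>
    (isOpen_Ioo.isClosed_compl.notMem_iff_infDist_pos ⟨α, fun h => lt_irrefl _ h.1⟩).1
      (not_not.2 hs)
  exact ⟨f, hf, intervalIntegral.intervalIntegral_pos_of_pos_on
    (((hf.continuous.pow 2).mul hg).intervalIntegrable _ _)
    (fun s hs => mul_pos (pow_pos (hpos s hs) 2) (hg0 s)) hαβ⟩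

end DirichletTrial

section Eigenvalues

/-- `neumannMu1` in the mass coordinate `s = ∫₀ˣ q`, where the Rayleigh quotient becomes
`(∫ v'² / g) / ∫ v²` with `g = 1 / q²`. -/
noncomputable def massNeumannMu1 (g : ℝ → ℝ) (α β : ℝ) : ℝ :=
  sInf {μ : ℝ | ∃ v : ℝ → ℝ, ContDiff ℝ 1 v ∧ 0 < (∫ s in α..β, v s ^ 2) ∧
    (∫ s in α..β, v s) = 0 ∧
    μ = (∫ s in α..β, deriv v s ^ 2 / g s) / ∫ s in α..β, v s ^ 2}

/-- The first Dirichlet eigenvalue of `-f'' = λ g f` on `(α, β)`; restricting the infimum to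
nonnegative trial functions does not change it. -/
noncomputable def dirichletMu1 (g : ℝ → ℝ) (α β : ℝ) : ℝ :=
  sInf {μ : ℝ | ∃ f : ℝ → ℝ, IsDirichletTrial α β f ∧ 0 < (∫ s in α..β, f s ^ 2 * g s) ∧
    μ = (∫ s in α..β, deriv f s ^ 2) / ∫ s in α..β, f s ^ 2 * g s}

variable {g : ℝ → ℝ} {α β : ℝ}

theorem massNeumannMu1_nonneg (hg0 : ∀ s, 0 < g s) (hαβ : α ≤ β) :
    0 ≤ massNeumannMu1 g α β := by
  refine Real.sInf_nonneg ?_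
  rintro _ ⟨v, -, hv, -, rfl⟩
  exact div_nonneg (intervalIntegral.integral_nonneg hαβ fun s _ =>
    div_nonneg (sq_nonneg _) (hg0 s).le) hv.le

theorem massNeumannMu1_mul_le (hg0 : ∀ s, 0 < g s) (hαβ : α ≤ β) {v : ℝ → ℝ}
    (hv : ContDiff ℝ 1 v) (hmean : ∫ s in α..β, v s = 0) :
    massNeumannMu1 g α β * (∫ s in α..β, v s ^ 2) ≤ ∫ s in α..β, deriv v s ^ 2 / g s := by
  have energy_nonneg : ∀ w : ℝ → ℝ, 0 ≤ ∫ s in α..β, deriv w s ^ 2 / g s := fun w =>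
    intervalIntegral.integral_nonneg hαβ fun s _ => div_nonneg (sq_nonneg _) (hg0 s).le
  have norm_nonneg : 0 ≤ ∫ s in α..β, v s ^ 2 :=
    intervalIntegral.integral_nonneg hαβ fun _ _ => sq_nonneg _
  rcases norm_nonneg.eq_or_lt with h | h
  · rw [← h, mul_zero]
    exact energy_nonneg v
  · rw [← le_div_iff₀ h]
    refine csInf_le ⟨0, ?_⟩ ⟨v, hv, h, hmean, rfl⟩
    rintro _ ⟨w, -, hw, -, rfl⟩
    exact div_nonneg (energy_nonneg w) hw.le

theorem le_massNeumannMu1 (hαβ : α < β) {c : ℝ}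
    (hc : ∀ v, ContDiff ℝ 1 v → 0 < (∫ s in α..β, v s ^ 2) → (∫ s in α..β, v s) = 0 →
      c ≤ (∫ s in α..β, deriv v s ^ 2 / g s) / ∫ s in α..β, v s ^ 2) :
    c ≤ massNeumannMu1 g α β := by
  refine le_csInf ⟨_, fun s => s - (α + β) / 2, by fun_prop, ?_, ?_, rfl⟩ ?_
  · refine intervalIntegral.integral_pos hαβ (by fun_prop) (fun _ _ => sq_nonneg _)
      ⟨α, left_mem_Icc.2 hαβ.le, ?_⟩
    have : α - (α + β) / 2 ≠ 0 := by linarith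
    positivity
  · rw [intervalIntegral.integral_comp_sub_right (fun s => s), integral_id]
    ring
  · rintro _ ⟨v, hv, hpos, hmean, rfl⟩
    exact hc v hv hpos hmean

theorem dirichletMu1_nonneg (g : ℝ → ℝ) (α β : ℝ) : 0 ≤ dirichletMu1 g α β := by
  refine Real.sInf_nonneg ?_
  rintro _ ⟨f, hf, hpos, rfl⟩
  exact div_nonneg hf.integral_deriv_sq_nonneg hpos.le

theorem dirichletMu1_mul_le (g : ℝ → ℝ) {f : ℝ → ℝ} (hf : IsDirichletTrial α β f) :
    dirichletMu1 g α β * (∫ s in α..β, f s ^ 2 * g s) ≤ ∫ s in α..β, deriv f s ^ 2 := by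
  rcases le_or_gt (∫ s in α..β, f s ^ 2 * g s) 0 with h | h
  · exact (mul_nonpos_of_nonneg_of_nonpos (dirichletMu1_nonneg g α β) h).trans
      hf.integral_deriv_sq_nonneg
  · rw [← le_div_iff₀ h]
    refine csInf_le ⟨0, ?_⟩ ⟨f, hf, h, rfl⟩
    rintro _ ⟨e, he, hpos, rfl⟩
    exact div_nonneg he.integral_deriv_sq_nonneg hpos.le

theorem le_dirichletMu1 (hg : Continuous g) (hg0 : ∀ s, 0 < g s) (hαβ : α < β) {c : ℝ}
    (hc : ∀ f, IsDirichletTrial α β f → 0 < (∫ s in α..β, f s ^ 2 * g s) →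
      c ≤ (∫ s in α..β, deriv f s ^ 2) / ∫ s in α..β, f s ^ 2 * g s) :
    c ≤ dirichletMu1 g α β := by
  obtain ⟨f, hf, hpos⟩ := exists_isDirichletTrial_integral_pos hg hg0 hαβ
  refine le_csInf ⟨_, f, hf, hpos, rfl⟩ ?_
  rintro _ ⟨e, he, hpos, rfl⟩
  exact hc e he hpos

end Eigenvalues

section Duality

/-- The primitive of `f * g` with zero mean on `(α, β)`. It sends Dirichlet trial functions to
Neumann trial functions, and intertwines the two eigenvalue problems up to a factor. -/
noncomputable def dualPotential (g f : ℝ → ℝ) (α β s : ℝ) : ℝ :=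
  (∫ x in α..s, f x * g x) - (∫ r in α..β, ∫ x in α..r, f x * g x) / (β - α)

/-- The absolute value of the primitive of `v` vanishing at `α`, frozen outside `[α, β]`. It sends
Neumann trial functions to Dirichlet trial functions. -/
noncomputable def absPrimitive (v : ℝ → ℝ) (α β s : ℝ) : ℝ :=
  |∫ x in α..max α (min s β), v x|

variable {g f v : ℝ → ℝ} {α β : ℝ}

theorem hasDerivAt_dualPotential (hg : Continuous g) (hf : Continuous f) (α β s : ℝ) :
    HasDerivAt (dualPotential g f α β) (f s * g s) s :=
  ((hf.mul hg).integral_hasStrictDerivAt α s).hasDerivAt.sub_const _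

theorem deriv_dualPotential (hg : Continuous g) (hf : Continuous f) (α β : ℝ) :
    deriv (dualPotential g f α β) = fun s => f s * g s :=
  funext fun s => (hasDerivAt_dualPotential hg hf α β s).deriv

theorem contDiff_dualPotential (hg : Continuous g) (hf : Continuous f) (α β : ℝ) :
    ContDiff ℝ 1 (dualPotential g f α β) := by
  refine contDiff_one_iff_deriv.2
    ⟨fun s => (hasDerivAt_dualPotential hg hf α β s).differentiableAt, ?_⟩
  rw [deriv_dualPotential hg hf]
  exact hf.mul hg

theorem continuous_dualPotential (hg : Continuous g) (hf : Continuous f) (α β : ℝ) :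
    Continuous (dualPotential g f α β) :=
  (contDiff_dualPotential hg hf α β).continuous

theorem integral_dualPotential (hg : Continuous g) (hf : Continuous f) (hαβ : α < β) :
    ∫ s in α..β, dualPotential g f α β s = 0 := by
  have hprim : Continuous fun r => ∫ x in α..r, f x * g x :=
    intervalIntegral.continuous_primitive (fun _ _ => (hf.mul hg).intervalIntegrable _ _) α
  simp only [dualPotential]
  rw [intervalIntegral.integral_sub (hprim.intervalIntegrable _ _) intervalIntegrable_const,
    intervalIntegral.integral_const, smul_eq_mul, mul_div_cancel₀ _ (sub_pos.2 hαβ).ne', sub_self]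

theorem massNeumannMu1_mul_integral_dualPotential_sq_le (hg : Continuous g)
    (hg0 : ∀ s, 0 < g s) (hf : Continuous f) (hαβ : α < β) :
    massNeumannMu1 g α β * (∫ s in α..β, dualPotential g f α β s ^ 2) ≤
      ∫ s in α..β, f s ^ 2 * g s := by
  have hdual := massNeumannMu1_mul_le hg0 hαβ.le (contDiff_dualPotential hg hf α β)
    (integral_dualPotential hg hf hαβ)
  rw [deriv_dualPotential hg hf] at hdual
  refine hdual.trans_eq (intervalIntegral.integral_congr fun s _ => ?_)
  have := (hg0 s).ne'
  field_simp

theorem integral_deriv_mul_dualPotential (hg : Continuous g) (hf : IsDirichletTrial α β f) :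
    ∫ s in α..β, deriv f s * dualPotential g f α β s = -∫ s in α..β, f s ^ 2 * g s := by
  have parts := (hf.absolutelyContinuousOnInterval α β).integral_mul_deriv_eq_deriv_mul
    (contDiff_dualPotential hg hf.continuous α β).contDiffOn.absolutelyContinuousOnInterval
  rw [hf.eq_zero_left, hf.eq_zero_right, deriv_dualPotential hg hf.continuous] at parts
  simp only [zero_mul, sub_self, zero_sub, ← mul_assoc, ← sq] at parts
  rw [parts, neg_neg]

theorem integral_deriv_add_dualPotential_sq_le (hg : Continuous g) (hg0 : ∀ s, 0 < g s)
    (hαβ : α < β) (hf : IsDirichletTrial α β f) :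
    (∫ s in α..β, (deriv f s + massNeumannMu1 g α β * dualPotential g f α β s) ^ 2) ≤
      (∫ s in α..β, deriv f s ^ 2) - massNeumannMu1 g α β * ∫ s in α..β, f s ^ 2 * g s := by
  rw [hf.integral_deriv_add_mul_sq (continuous_dualPotential hg hf.continuous α β),
    integral_deriv_mul_dualPotential hg hf]
  nlinarith [mul_le_mul_of_nonneg_left
    (massNeumannMu1_mul_integral_dualPotential_sq_le hg hg0 hf.continuous hαβ)
    (massNeumannMu1_nonneg hg0 hαβ.le)]

theorem absPrimitive_of_mem {s : ℝ} (hs : s ∈ Icc α β) :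
    absPrimitive v α β s = |∫ x in α..s, v x| := by
  rw [absPrimitive, min_eq_left hs.2, max_eq_right hs.1]

theorem isDirichletTrial_absPrimitive (hv : Continuous v) (hαβ : α ≤ β)
    (hmean : ∫ s in α..β, v s = 0) : IsDirichletTrial α β (absPrimitive v α β) where
  lipschitz := by
    obtain ⟨C, hC⟩ := isCompact_Icc.exists_bound_of_continuousOn (hv.continuousOn (s := Icc α β))
    have primitive : LipschitzOnWith C.toNNReal (fun s => ∫ x in α..s, v x) (Icc α β) :=
      (convex_Icc α β).lipschitzOnWith_of_nnnorm_hasDerivWithin_le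
        (fun s _ => (hv.integral_hasStrictDerivAt α s).hasDerivAt.hasDerivWithinAt) fun s hs =>
          NNReal.coe_le_coe.1 ((hC s hs).trans (Real.le_coe_toNNReal C))
    have clamp : LipschitzWith 1 fun s : ℝ => max α (min s β) :=
      (LipschitzWith.id.min_const β).const_max α
    refine ⟨_, lipschitzWith_one_norm.comp (lipschitzOnWith_univ.1
      (primitive.comp (clamp.lipschitzOnWith (s := univ)) fun s _ => ?_))⟩
    exact ⟨le_max_left _ _, max_le hαβ (min_le_right _ _)⟩
  nonneg s := abs_nonneg _
  eq_zero s hs := by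
    rw [mem_Ioo, not_and_or, not_lt, not_lt] at hs
    rcases hs with hs | hs
    · rw [absPrimitive, min_eq_left (hs.trans hαβ), max_eq_left hs, intervalIntegral.integral_same,
        abs_zero]
    · rw [absPrimitive, min_eq_right hs, max_eq_right hαβ, hmean, abs_zero]

theorem integral_absPrimitive_sq_mul (v g : ℝ → ℝ) (hαβ : α ≤ β) :
    ∫ s in α..β, absPrimitive v α β s ^ 2 * g s =
      ∫ s in α..β, (∫ x in α..s, v x) ^ 2 * g s := by
  refine intervalIntegral.integral_congr fun s hs => ?_
  rw [uIcc_of_le hαβ] at hs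
  simp only [absPrimitive_of_mem hs, sq_abs]

theorem integral_deriv_absPrimitive_sq_le (hv : Continuous v) (hαβ : α ≤ β)
    (hmean : ∫ s in α..β, v s = 0) :
    ∫ s in α..β, deriv (absPrimitive v α β) s ^ 2 ≤ ∫ s in α..β, v s ^ 2 := by
  refine intervalIntegral.integral_mono_on_of_le_Ioo hαβ
    ((isDirichletTrial_absPrimitive hv hαβ hmean).intervalIntegrable_deriv_sq _ _)
    ((hv.pow 2).intervalIntegrable _ _) fun s hs => ?_
  have hprim : HasDerivAt (fun s => ∫ x in α..s, v x) (v s) s :=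
    (hv.integral_hasStrictDerivAt α s).hasDerivAt
  have hloc : absPrimitive v α β =ᶠ[nhds s] fun s => |∫ x in α..s, v x| := by
    filter_upwards [Icc_mem_nhds hs.1 hs.2] with x hx using absPrimitive_of_mem hx
  rw [hloc.deriv_eq, ← hprim.deriv]
  exact deriv_abs_sq_le hprim.differentiableAt

theorem sq_integral_sq_le_primitive_mul_deriv (hg : Continuous g) (hg0 : ∀ s, 0 < g s) (hαβ : α ≤ β)
    (hv : ContDiff ℝ 1 v) (hmean : ∫ s in α..β, v s = 0) :
    (∫ s in α..β, v s ^ 2) ^ 2 ≤ (∫ s in α..β, (∫ x in α..s, v x) ^ 2 * g s) *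
      ∫ s in α..β, deriv v s ^ 2 / g s := by
  have hv' : Continuous (deriv v) := hv.continuous_deriv le_rfl
  have hprim : ∀ s, HasDerivAt (fun s => ∫ x in α..s, v x) (v s) s := fun s =>
    (hv.continuous.integral_hasStrictDerivAt α s).hasDerivAt
  set Φ : ℝ → ℝ := fun s => ∫ x in α..s, v x
  have hΦ : Continuous Φ := continuous_iff_continuousAt.2 fun s => (hprim s).continuousAt
  have parts : ∫ s in α..β, v s ^ 2 = -∫ s in α..β, Φ s * deriv v s := by
    rw [intervalIntegral.integral_mul_deriv_eq_deriv_mul (fun s _ => hprim s)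
      (fun s _ => (hv.differentiable one_ne_zero s).hasDerivAt)
      (hv.continuous.intervalIntegrable _ _) (hv'.intervalIntegrable _ _)]
    simp [Φ, hmean, sq]
  have hsqrt : Continuous fun s => √(g s) := hg.sqrt
  have hsqrt0 : ∀ s, √(g s) ≠ 0 := fun s => (Real.sqrt_pos.2 (hg0 s)).ne'
  have hsq : ∀ s, √(g s) ^ 2 = g s := fun s => Real.sq_sqrt (hg0 s).le
  have cauchySchwarz := sq_intervalIntegral_mul_le (f := fun s => Φ s * √(g s))
    (h := fun s => deriv v s / √(g s)) hαβ
    (((hΦ.mul hsqrt).pow 2).intervalIntegrable _ _)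
    (((hΦ.mul hsqrt).mul (hv'.div hsqrt hsqrt0)).intervalIntegrable _ _)
    (((hv'.div hsqrt hsqrt0).pow 2).intervalIntegrable _ _)
  have cancel : ∀ s, Φ s * √(g s) * (deriv v s / √(g s)) = Φ s * deriv v s := fun s => by
    have := hsqrt0 s
    field_simp
  simpa only [parts, neg_sq, cancel, mul_pow, div_pow, hsq] using cauchySchwarz

theorem massNeumannMu1_le_dirichletMu1 (hg : Continuous g) (hg0 : ∀ s, 0 < g s) (hαβ : α < β) :
    massNeumannMu1 g α β ≤ dirichletMu1 g α β := by
  refine le_dirichletMu1 hg hg0 hαβ fun f hf hpos => ?_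
  rw [le_div_iff₀ hpos, ← sub_nonneg]
  exact (intervalIntegral.integral_nonneg hαβ.le fun _ _ => sq_nonneg _).trans
    (integral_deriv_add_dualPotential_sq_le hg hg0 hαβ hf)

theorem dirichletMu1_le_massNeumannMu1 (hg : Continuous g) (hg0 : ∀ s, 0 < g s) (hαβ : α < β) :
    dirichletMu1 g α β ≤ massNeumannMu1 g α β := by
  refine le_massNeumannMu1 hαβ fun v hv hpos hmean => ?_
  have htrial := dirichletMu1_mul_le g (isDirichletTrial_absPrimitive hv.continuous hαβ.le hmean)
  have henergy := htrial.trans (integral_deriv_absPrimitive_sq_le hv.continuous hαβ.le hmean)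
  rw [integral_absPrimitive_sq_mul v g hαβ.le] at henergy
  have hdual := sq_integral_sq_le_primitive_mul_deriv hg hg0 hαβ.le hv hmean
  have hNeumann : 0 ≤ ∫ s in α..β, deriv v s ^ 2 / g s :=
    intervalIntegral.integral_nonneg hαβ.le fun s _ => div_nonneg (sq_nonneg _) (hg0 s).le
  rw [le_div_iff₀ hpos]
  refine le_of_mul_le_mul_right ?_ hpos
  nlinarith [mul_le_mul_of_nonneg_left hdual (dirichletMu1_nonneg g α β),
    mul_le_mul_of_nonneg_right henergy hNeumann]

theorem massNeumannMu1_eq_dirichletMu1 (hg : Continuous g) (hg0 : ∀ s, 0 < g s) (hαβ : α < β) :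
    massNeumannMu1 g α β = dirichletMu1 g α β :=
  (massNeumannMu1_le_dirichletMu1 hg hg0 hαβ).antisymm (dirichletMu1_le_massNeumannMu1 hg hg0 hαβ)

end Duality

section Minimizer

variable {g f : ℝ → ℝ} {α β : ℝ}

/-- A trial function attaining the infimum in `dirichletMu1`. -/
structure IsDirichletMinimizer (g : ℝ → ℝ) (α β : ℝ) (f : ℝ → ℝ) : Prop where
  isDirichletTrial : IsDirichletTrial α β f
  norm_pos : 0 < ∫ s in α..β, f s ^ 2 * g s
  energy_le : ∫ s in α..β, deriv f s ^ 2 ≤ dirichletMu1 g α β * ∫ s in α..β, f s ^ 2 * g s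

/-- The left side of the first-order Euler-Lagrange system of `dirichletMu1`: it vanishes on
`[α, β]` when `f` is a minimizer. -/
noncomputable def eulerLagrangeDefect (g f : ℝ → ℝ) (α β s : ℝ) : ℝ :=
  f s + dirichletMu1 g α β * ∫ x in α..s, dualPotential g f α β x

theorem eulerLagrangeDefect_sq_le (hg : Continuous g) (hg0 : ∀ s, 0 < g s)
    (hf : IsDirichletTrial α β f) {s : ℝ} (hs : s ∈ Icc α β) :
    eulerLagrangeDefect g f α β s ^ 2 ≤ (β - α) *
      ((∫ x in α..β, deriv f x ^ 2) - dirichletMu1 g α β * ∫ x in α..β, f x ^ 2 * g x) := by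
  rcases (hs.1.trans hs.2).eq_or_lt with rfl | hαβ
  · obtain rfl := Icc_self α ▸ hs
    simp [eulerLagrangeDefect, hf.eq_zero_left]
  set c := dirichletMu1 g α β with hc
  set U := dualPotential g f α β
  have hU : Continuous U := continuous_dualPotential hg hf.continuous α β
  have hac := hf.absolutelyContinuousOnInterval α s
  have hint := hf.intervalIntegrable_deriv_add_mul_sq hU c
  have primitive : eulerLagrangeDefect g f α β s = ∫ x in α..s, (deriv f x + c * U x) := by
    rw [intervalIntegral.integral_add hac.intervalIntegrable_deriv
      ((hU.intervalIntegrable _ _).const_mul _), intervalIntegral.integral_const_mul,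
      hac.integral_deriv_eq_sub, hf.eq_zero_left, sub_zero, eulerLagrangeDefect]
  calc eulerLagrangeDefect g f α β s ^ 2
      ≤ (s - α) * ∫ x in α..s, (deriv f x + c * U x) ^ 2 := by
        rw [primitive]
        exact sq_intervalIntegral_le hs.1
          (hac.intervalIntegrable_deriv.add ((hU.intervalIntegrable _ _).const_mul _)) (hint _ _)
    _ ≤ (β - α) * ∫ x in α..β, (deriv f x + c * U x) ^ 2 :=
        mul_le_mul (sub_le_sub_right hs.2 α)
          (intervalIntegral.integral_mono_interval le_rfl hs.1 hs.2
            (.of_forall fun _ => sq_nonneg _) (hint _ _))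
          (intervalIntegral.integral_nonneg hs.1 fun _ _ => sq_nonneg _) (sub_pos.2 hαβ).le
    _ ≤ _ := by
        refine mul_le_mul_of_nonneg_left ?_ (sub_pos.2 hαβ).le
        have := integral_deriv_add_dualPotential_sq_le hg hg0 hαβ hf
        rwa [massNeumannMu1_eq_dirichletMu1 hg hg0 hαβ, ← hc] at this

/-- The class in which trial functions of energy at most one live: membership survives locally
uniform limits, unlike Lipschitz continuity with a uniform constant. -/
def holderTrials (α β : ℝ) : Set C(ℝ, ℝ) :=
  {F | (∀ s, 0 ≤ F s) ∧ (∀ s, s ∉ Ioo α β → F s = 0) ∧ ∀ x y, (F x - F y) ^ 2 ≤ |x - y|}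

theorem equicontinuous_of_sq_sub_le {ι : Type*} {F : ι → ℝ → ℝ}
    (hF : ∀ i x y, (F i x - F i y) ^ 2 ≤ |x - y|) : Equicontinuous F :=
  Metric.equicontinuous_of_continuity_modulus Real.sqrt
    (Real.continuous_sqrt.tendsto' 0 0 Real.sqrt_zero) _ fun x y i =>
      Real.le_sqrt_of_sq_le (by simpa [Real.dist_eq] using hF i x y)

theorem isCompact_holderTrials (α β : ℝ) : IsCompact (holderTrials α β) := by
  refine ArzelaAscoli.isCompact_of_equicontinuous _ ?_
    (equicontinuous_of_sq_sub_le fun F : holderTrials α β => F.2.2.2)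
  have image_eq : ContinuousMap.toFun '' holderTrials α β = {F : ℝ → ℝ | (∀ s, 0 ≤ F s) ∧
      (∀ s, s ∉ Ioo α β → F s = 0) ∧ ∀ x y, (F x - F y) ^ 2 ≤ |x - y|} := by
    refine Subset.antisymm (by rintro _ ⟨F, hF, rfl⟩; exact hF) fun F hF => ?_
    exact ⟨⟨F, (equicontinuous_of_sq_sub_le fun _ : Unit => hF.2.2).continuous ()⟩, hF, rfl⟩
  rw [image_eq]
  refine (isCompact_univ_pi fun s : ℝ => isCompact_Icc (a := 0) (b := √|s - α|)).of_isClosed_subset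
    ?_ fun F hF s _ => ⟨hF.1 s, ?_⟩
  · simp only [Set.ofPred_and, Set.ofPred_forall]
    refine (isClosed_iInter fun s => ?_).inter ((isClosed_iInter fun s => isClosed_iInter fun _ =>
      ?_).inter (isClosed_iInter fun x => isClosed_iInter fun y => ?_))
    · exact isClosed_le continuous_const (continuous_apply s)
    · exact isClosed_eq (continuous_apply s) continuous_const
    · exact isClosed_le (by fun_prop) continuous_const
  · have := hF.2.2 s α
    rw [hF.2.1 α fun h => lt_irrefl _ h.1, sub_zero] at this
    exact Real.le_sqrt_of_sq_le this

theorem continuous_integral_sq_mul (hg : Continuous g) (α β : ℝ) :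
    Continuous fun F : C(ℝ, ℝ) => ∫ s in α..β, F s ^ 2 * g s :=
  intervalIntegral.continuous_parametric_intervalIntegral_of_continuous' (by fun_prop) α β

theorem continuous_eulerLagrangeDefect (hg : Continuous g) (α β s : ℝ) :
    Continuous fun F : C(ℝ, ℝ) => eulerLagrangeDefect g F α β s := by
  unfold eulerLagrangeDefect dualPotential
  fun_prop

theorem isDirichletMinimizer_of_eulerLagrangeDefect_eq_zero (hg : Continuous g)
    (hg0 : ∀ s, 0 < g s) (hαβ : α < β) (hf : Continuous f) (hf0 : ∀ s, 0 ≤ f s)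
    (hsupp : ∀ s, s ∉ Ioo α β → f s = 0) (hpos : 0 < ∫ s in α..β, f s ^ 2 * g s)
    (hdefect : ∀ s ∈ Icc α β, eulerLagrangeDefect g f α β s = 0) :
    IsDirichletMinimizer g α β f := by
  set c := dirichletMu1 g α β with hc
  set v : ℝ → ℝ := fun s => c * dualPotential g f α β s with hv_def
  have hv : Continuous v := continuous_const.mul (continuous_dualPotential hg hf α β)
  have hmean : ∫ s in α..β, v s = 0 := by
    rw [hv_def, intervalIntegral.integral_const_mul, integral_dualPotential hg hf hαβ, mul_zero]
  have htrial := isDirichletTrial_absPrimitive hv hαβ.le hmean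
  have f_eq : f = absPrimitive v α β := by
    ext s
    by_cases hs : s ∈ Ioo α β
    · have hs := Ioo_subset_Icc_self hs
      rw [absPrimitive_of_mem hs, intervalIntegral.integral_const_mul, ← abs_of_nonneg (hf0 s),
        eq_neg_of_add_eq_zero_left (hdefect s hs), abs_neg]
    · rw [hsupp s hs, htrial.eq_zero s hs]
  refine ⟨f_eq ▸ htrial, hpos, ?_⟩
  have potential_le := massNeumannMu1_mul_integral_dualPotential_sq_le hg hg0 hf hαβ
  rw [massNeumannMu1_eq_dirichletMu1 hg hg0 hαβ, ← hc] at potential_le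
  calc ∫ s in α..β, deriv f s ^ 2 ≤ ∫ s in α..β, v s ^ 2 :=
        f_eq ▸ integral_deriv_absPrimitive_sq_le hv hαβ.le hmean
    _ = c * (c * ∫ s in α..β, dualPotential g f α β s ^ 2) := by
        simp only [hv_def, mul_pow, intervalIntegral.integral_const_mul]
        ring
    _ ≤ c * ∫ s in α..β, f s ^ 2 * g s :=
        mul_le_mul_of_nonneg_left potential_le (dirichletMu1_nonneg g α β)

/-- The trial functions of energy at most one, up to closure: the bound on the defect retains what
is needed of the energy and, unlike the energy, is continuous in the function. -/
def normalizedTrials (g : ℝ → ℝ) (α β : ℝ) : Set C(ℝ, ℝ) :=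
  holderTrials α β ∩ {F | ∀ s ∈ Icc α β, eulerLagrangeDefect g F α β s ^ 2 ≤
    (β - α) * (1 - dirichletMu1 g α β * ∫ x in α..β, F x ^ 2 * g x)}

theorem isCompact_normalizedTrials (hg : Continuous g) (α β : ℝ) :
    IsCompact (normalizedTrials g α β) := by
  refine (isCompact_holderTrials α β).inter_right ?_
  simp only [Set.ofPred_forall]
  exact isClosed_iInter fun s => isClosed_iInter fun _ =>
    isClosed_le ((continuous_eulerLagrangeDefect hg α β s).pow 2)
      (by have := continuous_integral_sq_mul hg α β; fun_prop)

theorem exists_normalizedTrials_integral_eq_div (hg : Continuous g) (hg0 : ∀ s, 0 < g s)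
    (hf : IsDirichletTrial α β f) (henergy : 0 < ∫ s in α..β, deriv f s ^ 2) :
    ∃ F ∈ normalizedTrials g α β, ∫ s in α..β, F s ^ 2 * g s =
      (∫ s in α..β, f s ^ 2 * g s) / ∫ s in α..β, deriv f s ^ 2 := by
  set E := ∫ s in α..β, deriv f s ^ 2
  have htrial := hf.const_mul (c := (√E)⁻¹) (by positivity)
  have hscale : (√E)⁻¹ ^ 2 = E⁻¹ := by rw [inv_pow, Real.sq_sqrt henergy.le]
  have energy_eq_one : ∫ s in α..β, deriv (fun x => (√E)⁻¹ * f x) s ^ 2 = 1 := by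
    simp only [deriv_const_mul_field', mul_pow, hscale, intervalIntegral.integral_const_mul]
    exact inv_mul_cancel₀ henergy.ne'
  refine ⟨⟨_, htrial.continuous⟩, ⟨⟨htrial.nonneg, htrial.eq_zero, fun x y => ?_⟩,
    fun s hs => ?_⟩, ?_⟩
  · exact (htrial.sq_sub_le x y).trans_eq (by rw [energy_eq_one, mul_one])
  · exact (eulerLagrangeDefect_sq_le hg hg0 htrial hs).trans_eq (by rw [energy_eq_one]; rfl)
  · simp only [ContinuousMap.coe_mk, mul_pow, hscale, mul_assoc,
      intervalIntegral.integral_const_mul]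
    rw [div_eq_inv_mul]

theorem exists_isDirichletMinimizer (hg : Continuous g) (hg0 : ∀ s, 0 < g s) (hαβ : α < β) :
    ∃ f, IsDirichletMinimizer g α β f := by
  set B : C(ℝ, ℝ) → ℝ := fun F => ∫ s in α..β, F s ^ 2 * g s
  have exists_normalized : ∀ e, IsDirichletTrial α β e → 0 < (∫ s in α..β, e s ^ 2 * g s) →
      ∃ F ∈ normalizedTrials g α β,
        B F = (∫ s in α..β, e s ^ 2 * g s) / ∫ s in α..β, deriv e s ^ 2 := fun e he hpos =>
    exists_normalizedTrials_integral_eq_div hg hg0 he (he.integral_deriv_sq_pos hpos)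
  obtain ⟨e₀, he₀, he₀_pos⟩ := exists_isDirichletTrial_integral_pos hg hg0 hαβ
  obtain ⟨F₀, hF₀, hBF₀⟩ := exists_normalized e₀ he₀ he₀_pos
  obtain ⟨F, hF, hmax⟩ := (isCompact_normalizedTrials hg α β).exists_isMaxOn ⟨F₀, hF₀⟩
    (continuous_integral_sq_mul hg α β).continuousOn
  have hBF : 0 < B F :=
    (div_pos he₀_pos (he₀.integral_deriv_sq_pos he₀_pos)).trans_le (hBF₀.ge.trans (hmax hF₀))
  have inv_le : (B F)⁻¹ ≤ dirichletMu1 g α β := le_dirichletMu1 hg hg0 hαβ fun e he hpos => by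
    obtain ⟨G, hG, hBG⟩ := exists_normalized e he hpos
    rw [← inv_div, ← hBG]
    exact inv_anti₀ (hBG ▸ div_pos hpos (he.integral_deriv_sq_pos hpos)) (hmax hG)
  have hdefect : ∀ s ∈ Icc α β, eulerLagrangeDefect g F α β s = 0 := fun s hs => by
    refine pow_eq_zero_iff two_ne_zero |>.1 (le_antisymm ((hF.2 s hs).trans ?_) (sq_nonneg _))
    refine mul_nonpos_of_nonneg_of_nonpos (sub_pos.2 hαβ).le (sub_nonpos.2 ?_)
    simpa only [one_div, inv_mul_cancel₀ hBF.ne'] using mul_le_mul_of_nonneg_right inv_le hBF.le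
  exact ⟨F, isDirichletMinimizer_of_eulerLagrangeDefect_eq_zero hg hg0 hαβ F.continuous hF.1.1
    hF.1.2.1 hBF hdefect⟩

namespace IsDirichletMinimizer

theorem eulerLagrangeDefect_eq_zero (hf : IsDirichletMinimizer g α β f) (hg : Continuous g)
    (hg0 : ∀ s, 0 < g s) {s : ℝ} (hs : s ∈ Icc α β) : eulerLagrangeDefect g f α β s = 0 := by
  refine pow_eq_zero_iff two_ne_zero |>.1 (le_antisymm ?_ (sq_nonneg _))
  refine (eulerLagrangeDefect_sq_le hg hg0 hf.isDirichletTrial hs).trans ?_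
  exact mul_nonpos_of_nonneg_of_nonpos (sub_nonneg.2 (hs.1.trans hs.2)) (sub_nonpos.2 hf.energy_le)

theorem dirichletMu1_pos (hf : IsDirichletMinimizer g α β f) : 0 < dirichletMu1 g α β := by
  have henergy := (hf.isDirichletTrial.integral_deriv_sq_pos hf.norm_pos).trans_le hf.energy_le
  exact pos_of_mul_pos_left henergy hf.norm_pos.le

theorem hasDerivAt (hf : IsDirichletMinimizer g α β f) (hg : Continuous g)
    (hg0 : ∀ s, 0 < g s) {s : ℝ} (hs : s ∈ Ioo α β) :
    HasDerivAt f (-(dirichletMu1 g α β * dualPotential g f α β s)) s := by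
  have hU := continuous_dualPotential hg hf.isDirichletTrial.continuous α β
  refine (((hU.integral_hasStrictDerivAt α s).hasDerivAt.const_mul
    (dirichletMu1 g α β)).fun_neg).congr_of_eventuallyEq ?_
  filter_upwards [Icc_mem_nhds hs.1 hs.2] with x hx
  exact eq_neg_of_add_eq_zero_left (hf.eulerLagrangeDefect_eq_zero hg hg0 hx)

end IsDirichletMinimizer

end Minimizer

section Uniqueness

theorem eqOn_Icc_of_hasDerivAt_sturmLiouville {g : ℝ → ℝ} (hg : Continuous g) (c : ℝ)
    {p p' : ℝ → ℝ × ℝ} {l r t : ℝ} (ht : t ∈ Ioo l r)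
    (hp : ContinuousOn p (Icc l r)) (hp' : ContinuousOn p' (Icc l r))
    (hdp : ∀ s ∈ Ioo l r, HasDerivAt p (-(c * (p s).2), (p s).1 * g s) s)
    (hdp' : ∀ s ∈ Ioo l r, HasDerivAt p' (-(c * (p' s).2), (p' s).1 * g s) s)
    (heq : p t = p' t) : EqOn p p' (Icc l r) := by
  obtain ⟨C, hC⟩ := isCompact_Icc.exists_bound_of_continuousOn (s := Icc l r) hg.continuousOn
  refine ODE_solution_unique_of_mem_Icc (v := fun s y => (-(c * y.2), y.1 * g s))
    (s := fun _ => univ) (K := Real.toNNReal (max |c| C)) (fun s hs => ?_) ht hp hdp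
    (fun _ _ => mem_univ _) hp' hdp' (fun _ _ => mem_univ _) heq
  refine LipschitzWith.lipschitzOnWith (.of_dist_le_mul fun y z => ?_)
  rw [Real.coe_toNNReal _ ((abs_nonneg c).trans (le_max_left _ _)), Prod.dist_eq]
  refine max_le ?_ ?_
  · rw [dist_neg_neg, Real.dist_eq, ← mul_sub, abs_mul]
    exact mul_le_mul (le_max_left _ _) (le_max_right _ _) (abs_nonneg _)
      ((abs_nonneg c).trans (le_max_left _ _))
  · rw [Real.dist_eq, ← sub_mul, abs_mul, mul_comm]
    exact mul_le_mul ((hC s (Ioo_subset_Icc_self hs)).trans (le_max_right _ _)) (le_max_left _ _)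
      (abs_nonneg _) ((abs_nonneg c).trans (le_max_left _ _))

namespace IsDirichletMinimizer

variable {g e f : ℝ → ℝ} {α β α' β' : ℝ}

theorem hasDerivAt_prodMk (hf : IsDirichletMinimizer g α β f) (hg : Continuous g)
    (hg0 : ∀ s, 0 < g s) {s : ℝ} (hs : s ∈ Ioo α β) :
    HasDerivAt (fun s => (f s, dualPotential g f α β s))
      (-(dirichletMu1 g α β * dualPotential g f α β s), f s * g s) s :=
  (hf.hasDerivAt hg hg0 hs).prodMk
    (hasDerivAt_dualPotential hg hf.isDirichletTrial.continuous α β s)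

theorem continuous_prodMk (hf : IsDirichletMinimizer g α β f) (hg : Continuous g) :
    Continuous fun s => (f s, dualPotential g f α β s) :=
  hf.isDirichletTrial.continuous.prodMk
    (continuous_dualPotential hg hf.isDirichletTrial.continuous α β)

theorem eqOn_Icc_of_deriv_eq (he : IsDirichletMinimizer g α β e)
    (hf : IsDirichletMinimizer g α' β' f) (hg : Continuous g) (hg0 : ∀ s, 0 < g s)
    (hμ : dirichletMu1 g α β = dirichletMu1 g α' β')
    {l r t : ℝ} (ht : t ∈ Ioo l r) (hlr : Ioo l r ⊆ Ioo α β) (hlr' : Ioo l r ⊆ Ioo α' β')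
    (hval : e t = f t) (hderiv : deriv e t = deriv f t) : EqOn e f (Icc l r) := by
  have potential_eq : dualPotential g e α β t = dualPotential g f α' β' t := by
    rw [(he.hasDerivAt hg hg0 (hlr ht)).deriv, (hf.hasDerivAt hg hg0 (hlr' ht)).deriv, ← hμ,
      neg_inj] at hderiv
    exact mul_left_cancel₀ he.dirichletMu1_pos.ne' hderiv
  have eqOn := eqOn_Icc_of_hasDerivAt_sturmLiouville hg (dirichletMu1 g α β) ht
    (he.continuous_prodMk hg).continuousOn (hf.continuous_prodMk hg).continuousOn
    (fun s hs => he.hasDerivAt_prodMk hg hg0 (hlr hs))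
    (fun s hs => hμ ▸ hf.hasDerivAt_prodMk hg hg0 (hlr' hs)) (Prod.ext hval potential_eq)
  exact fun s hs => congrArg Prod.fst (eqOn hs)

theorem pos (hf : IsDirichletMinimizer g α β f) (hg : Continuous g) (hg0 : ∀ s, 0 < g s)
    {t : ℝ} (ht : t ∈ Ioo α β) : 0 < f t := by
  refine (hf.isDirichletTrial.nonneg t).lt_of_ne' fun f_t => hf.norm_pos.ne' ?_
  have deriv_t : deriv f t = 0 :=
    IsLocalMin.deriv_eq_zero (.of_forall fun s => f_t.trans_le (hf.isDirichletTrial.nonneg s))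
  have potential_t : dualPotential g f α β t = 0 := by
    rw [(hf.hasDerivAt hg hg0 ht).deriv, neg_eq_zero] at deriv_t
    exact (mul_eq_zero.1 deriv_t).resolve_left hf.dirichletMu1_pos.ne'
  have eqOn_zero := eqOn_Icc_of_hasDerivAt_sturmLiouville hg (dirichletMu1 g α β)
    (p' := fun _ => 0) ht (hf.continuous_prodMk hg).continuousOn continuousOn_const
    (fun s hs => hf.hasDerivAt_prodMk hg hg0 hs)
    (fun s _ => (hasDerivAt_const s 0).congr_deriv (Prod.ext (by simp) (by simp)))
    (Prod.ext f_t potential_t)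
  rw [intervalIntegral.integral_congr fun s hs => ?_, intervalIntegral.integral_zero]
  have f_s : f s = 0 := congrArg Prod.fst (eqOn_zero (uIcc_of_le (ht.1.trans ht.2).le ▸ hs))
  simp only [f_s, zero_pow two_ne_zero, zero_mul]

end IsDirichletMinimizer

end Uniqueness

section Polarization

/-- The polarization of `f` about `σ`, also called two-point rearrangement: of the values at two
points symmetric about `σ`, the larger one is moved to the left point. -/
noncomputable def polarize (σ : ℝ) (f : ℝ → ℝ) (s : ℝ) : ℝ :=
  if s ≤ σ then max (f s) (f (2 * σ - s)) else min (f s) (f (2 * σ - s))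

variable {g f : ℝ → ℝ} {α β σ s : ℝ}

theorem polarize_of_le (hs : s ≤ σ) : polarize σ f s = max (f s) (f (2 * σ - s)) := if_pos hs

theorem polarize_of_ge (hs : σ ≤ s) : polarize σ f s = min (f s) (f (2 * σ - s)) := by
  rcases hs.eq_or_lt with rfl | hs
  · rw [polarize_of_le le_rfl, two_mul, add_sub_cancel_right, max_self, min_self]
  · exact if_neg hs.not_ge

theorem polarize_reflect (hs : s ≤ σ) :
    polarize σ f (2 * σ - s) = min (f s) (f (2 * σ - s)) := by
  rw [polarize_of_ge (by linarith), sub_sub_cancel, min_comm]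

theorem lipschitzWith_comp_reflect {K : NNReal} (hf : LipschitzWith K f) (σ : ℝ) :
    LipschitzWith K fun s => f (2 * σ - s) := by
  have reflect : LipschitzWith 1 fun s : ℝ => 2 * σ - s := .of_dist_le_mul fun x y => by
    rw [dist_sub_left, NNReal.coe_one, one_mul]
  exact mul_one K ▸ hf.comp reflect

theorem exists_lipschitzWith_polarize {K : NNReal} (hf : LipschitzWith K f) (σ : ℝ) :
    ∃ K', LipschitzWith K' (polarize σ f) := by
  have hf' := lipschitzWith_comp_reflect hf σ
  have polarize_eq : polarize σ f = fun s => max (f (min s σ)) (f (2 * σ - min s σ)) +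
      min (f (max s σ)) (f (2 * σ - max s σ)) - f σ := by
    have reflect_self : 2 * σ - σ = σ := by ring
    ext s
    rcases le_total s σ with hs | hs
    · rw [polarize_of_le hs, min_eq_left hs, max_eq_right hs, reflect_self, min_self,
        add_sub_cancel_right]
    · rw [polarize_of_ge hs, min_eq_right hs, max_eq_left hs, reflect_self, max_self,
        add_sub_cancel_left]
  rw [polarize_eq]
  exact ⟨_, (((hf.max hf').comp (LipschitzWith.id.min_const σ)).add
    ((hf.min hf').comp (LipschitzWith.id.max_const σ))).sub (.const (f σ))⟩

theorem isDirichletTrial_polarize (hf : IsDirichletTrial α β f) (hσ : 2 * σ ≤ α + β) :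
    IsDirichletTrial (2 * σ - β) (2 * σ - α) (polarize σ f) where
  lipschitz := let ⟨_, hK⟩ := hf.lipschitz; exists_lipschitzWith_polarize hK σ
  nonneg s := by
    rcases le_total s σ with hs | hs
    · exact polarize_of_le hs ▸ le_max_of_le_left (hf.nonneg s)
    · exact polarize_of_ge hs ▸ le_min (hf.nonneg s) (hf.nonneg _)
  eq_zero s hs := by
    have reflect_eq_zero : f (2 * σ - s) = 0 :=
      hf.eq_zero _ fun h => hs ⟨by linarith [h.2], by linarith [h.1]⟩
    rcases le_total s σ with hsσ | hsσ
    · have eq_zero : f s = 0 := hf.eq_zero s fun h => hs ⟨by linarith [h.1], by linarith [h.1]⟩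
      rw [polarize_of_le hsσ, reflect_eq_zero, eq_zero, max_self]
    · rw [polarize_of_ge hsσ, reflect_eq_zero, min_eq_right (hf.nonneg s)]

theorem deriv_polarize_sq_add_reflect_le (hs : s < σ) (hf : DifferentiableAt ℝ f s)
    (hf' : DifferentiableAt ℝ (fun x => f (2 * σ - x)) s)
    (hff' : DifferentiableAt ℝ (fun x => |f x - f (2 * σ - x)|) s) :
    deriv (polarize σ f) s ^ 2 + deriv (polarize σ f) (2 * σ - s) ^ 2 ≤
      deriv f s ^ 2 + deriv f (2 * σ - s) ^ 2 := by
  have deriv_left : deriv (polarize σ f) s = deriv (fun x => max (f x) (f (2 * σ - x))) s :=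
    Filter.EventuallyEq.deriv_eq <| by
      filter_upwards [Iic_mem_nhds hs] with x hx using polarize_of_le hx
  have deriv_right : -deriv (polarize σ f) (2 * σ - s) =
      deriv (fun x => min (f x) (f (2 * σ - x))) s := by
    rw [← deriv_comp_const_sub]
    refine Filter.EventuallyEq.deriv_eq ?_
    filter_upwards [Iic_mem_nhds hs] with x hx using polarize_reflect hx
  rw [deriv_left, ← neg_sq (deriv (polarize σ f) _), deriv_right, ← neg_sq (deriv f (2 * σ - s)),
    ← deriv_comp_const_sub f]
  exact deriv_max_sq_add_deriv_min_sq_le hf hf' hff'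

theorem integral_deriv_polarize_sq_le (hf : IsDirichletTrial α β f) (hαβ : α ≤ β)
    (hσ : 2 * σ ≤ α + β) :
    ∫ s in (2 * σ - β)..(2 * σ - α), deriv (polarize σ f) s ^ 2 ≤ ∫ s in α..β, deriv f s ^ 2 := by
  have he := isDirichletTrial_polarize hf hσ
  obtain ⟨K, hK⟩ := hf.lipschitz
  have hK' := lipschitzWith_comp_reflect hK σ
  have hKK' : LipschitzWith _ fun s => |f s - f (2 * σ - s)| :=
    lipschitzWith_one_norm.comp (hK.sub hK')
  rw [← he.integral_deriv_sq (b := β) le_rfl (by linarith),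
    ← hf.integral_deriv_sq (a := 2 * σ - β) (by linarith) le_rfl,
    intervalIntegral_fold (sub_add_cancel _ _) he.intervalIntegrable_deriv_sq,
    intervalIntegral_fold (sub_add_cancel _ _) hf.intervalIntegrable_deriv_sq]
  have fold_integrable : ∀ {e : ℝ → ℝ}, (∀ a b, IntervalIntegrable (fun s => deriv e s ^ 2)
      volume a b) → IntervalIntegrable (fun s => deriv e s ^ 2 + deriv e (2 * σ - s) ^ 2)
        volume (2 * σ - β) σ := fun hi =>
    (hi _ _).add (by simpa using (hi (2 * σ - (2 * σ - β)) (2 * σ - σ)).comp_sub_left (2 * σ))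
  refine intervalIntegral.integral_mono_ae_restrict (by linarith)
    (fold_integrable he.intervalIntegrable_deriv_sq)
    (fold_integrable hf.intervalIntegrable_deriv_sq) ?_
  filter_upwards [ae_restrict_mem measurableSet_Icc, ae_restrict_of_ae (volume.ae_ne σ),
    ae_restrict_of_ae hK.ae_differentiableAt, ae_restrict_of_ae hK'.ae_differentiableAt,
    ae_restrict_of_ae hKK'.ae_differentiableAt] with s hs hne hf hf' hff'
  exact deriv_polarize_sq_add_reflect_le (hs.2.lt_of_ne hne) hf hf' hff'

theorem integral_sq_mul_le_polarize (hg : Continuous g)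
    (hgσ : ∀ s ≤ σ, g (2 * σ - s) ≤ g s) (hf : IsDirichletTrial α β f) (hαβ : α ≤ β)
    (hσ : 2 * σ ≤ α + β) :
    ∫ s in α..β, f s ^ 2 * g s ≤
      ∫ s in (2 * σ - β)..(2 * σ - α), polarize σ f s ^ 2 * g s := by
  have he := isDirichletTrial_polarize hf hσ
  have hf_cont := hf.continuous
  have he_cont := he.continuous
  have integrable : ∀ {h : ℝ → ℝ}, Continuous h → ∀ a b, IntervalIntegrable h volume a b :=
    fun hh a b => hh.intervalIntegrable a b
  rw [← he.integral_sq_mul g (b := β) le_rfl (by linarith),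
    ← hf.integral_sq_mul g (a := 2 * σ - β) (by linarith) le_rfl,
    intervalIntegral_fold (sub_add_cancel _ _) (integrable (by fun_prop)),
    intervalIntegral_fold (sub_add_cancel _ _) (integrable (by fun_prop))]
  refine intervalIntegral.integral_mono_on (by linarith) (integrable (by fun_prop) _ _)
    (integrable (by fun_prop) _ _) fun s hs => ?_
  rw [polarize_of_le hs.2, polarize_reflect hs.2]
  rcases le_total (f s) (f (2 * σ - s)) with hle | hle
  · rw [max_eq_right hle, min_eq_left hle]
    nlinarith [pow_le_pow_left₀ (hf.nonneg s) hle 2, hgσ s hs.2]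
  · rw [max_eq_left hle, min_eq_right hle]

theorem dirichletMu1_reflect_le (hg : Continuous g) (hg0 : ∀ s, 0 < g s)
    (hgσ : ∀ s ≤ σ, g (2 * σ - s) ≤ g s) (hαβ : α < β) (hσ : 2 * σ ≤ α + β) :
    dirichletMu1 g (2 * σ - β) (2 * σ - α) ≤ dirichletMu1 g α β := by
  refine le_dirichletMu1 hg hg0 hαβ fun f hf hpos => (le_div_iff₀ hpos).2 ?_
  calc dirichletMu1 g (2 * σ - β) (2 * σ - α) * ∫ s in α..β, f s ^ 2 * g s
      ≤ dirichletMu1 g (2 * σ - β) (2 * σ - α) *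
          ∫ s in (2 * σ - β)..(2 * σ - α), polarize σ f s ^ 2 * g s :=
        mul_le_mul_of_nonneg_left (integral_sq_mul_le_polarize hg hgσ hf hαβ.le hσ)
          (dirichletMu1_nonneg _ _ _)
    _ ≤ ∫ s in (2 * σ - β)..(2 * σ - α), deriv (polarize σ f) s ^ 2 :=
        dirichletMu1_mul_le g (isDirichletTrial_polarize hf hσ)
    _ ≤ ∫ s in α..β, deriv f s ^ 2 := integral_deriv_polarize_sq_le hf hαβ.le hσ

namespace IsDirichletMinimizer

theorem isDirichletMinimizer_polarize (hf : IsDirichletMinimizer g α β f) (hg : Continuous g)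
    (hgσ : ∀ s ≤ σ, g (2 * σ - s) ≤ g s) (hαβ : α ≤ β) (hσ : 2 * σ ≤ α + β)
    (hμ : dirichletMu1 g (2 * σ - β) (2 * σ - α) = dirichletMu1 g α β) :
    IsDirichletMinimizer g (2 * σ - β) (2 * σ - α) (polarize σ f) where
  isDirichletTrial := isDirichletTrial_polarize hf.isDirichletTrial hσ
  norm_pos := hf.norm_pos.trans_le (integral_sq_mul_le_polarize hg hgσ hf.isDirichletTrial hαβ hσ)
  energy_le := calc
    _ ≤ _ := integral_deriv_polarize_sq_le hf.isDirichletTrial hαβ hσ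
    _ ≤ _ := hf.energy_le
    _ ≤ _ := hμ ▸ mul_le_mul_of_nonneg_left
      (integral_sq_mul_le_polarize hg hgσ hf.isDirichletTrial hαβ hσ) (dirichletMu1_nonneg _ _ _)

theorem le_reflect (hf : IsDirichletMinimizer g α β f)
    (he : IsDirichletMinimizer g (2 * σ - β) (2 * σ - α) (polarize σ f)) (hg : Continuous g)
    (hg0 : ∀ s, 0 < g s) (hσ : 2 * σ < α + β)
    (hμ : dirichletMu1 g (2 * σ - β) (2 * σ - α) = dirichletMu1 g α β) (hs : s < σ) :
    f s ≤ f (2 * σ - s) := by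
  -- Otherwise the polarization agrees with `f` near `s`, hence up to `α` by unique continuation;
  -- but `f` vanishes at `α`, which is interior for the polarization.
  by_contra! hlt
  have hsα : s ∈ Ioo α β := by
    by_contra hs
    exact hlt.not_ge (hf.isDirichletTrial.eq_zero s hs ▸ hf.isDirichletTrial.nonneg _)
  have hασ : α < σ := hsα.1.trans hs
  have hcont := hf.isDirichletTrial.continuous
  have polarize_eq : polarize σ f =ᶠ[nhds s] f := by
    filter_upwards [Iic_mem_nhds hs, (isOpen_lt (hcont.comp (continuous_sub_left (2 * σ)))
      hcont).mem_nhds hlt] with x hx hlt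
    rw [polarize_of_le hx]
    exact max_eq_left (le_of_lt hlt)
  have eqOn : EqOn (polarize σ f) f (Icc α (2 * σ - α)) :=
    he.eqOn_Icc_of_deriv_eq hf hg hg0 hμ ⟨hsα.1, by linarith⟩
      (Ioo_subset_Ioo_left (by linarith)) (Ioo_subset_Ioo_right (by linarith))
      polarize_eq.eq_of_nhds polarize_eq.deriv_eq
  have polarize_pos := he.pos hg hg0 (t := α) ⟨by linarith, by linarith⟩
  rw [eqOn ⟨le_rfl, by linarith⟩, hf.isDirichletTrial.eq_zero_left] at polarize_pos
  exact lt_irrefl _ polarize_pos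

theorem polarize_eq_reflect (hf : IsDirichletMinimizer g α β f)
    (he : IsDirichletMinimizer g (2 * σ - β) (2 * σ - α) (polarize σ f)) (hg : Continuous g)
    (hg0 : ∀ s, 0 < g s) (hσ : 2 * σ < α + β)
    (hμ : dirichletMu1 g (2 * σ - β) (2 * σ - α) = dirichletMu1 g α β) :
    polarize σ f = fun s => f (2 * σ - s) := by
  ext s
  rcases lt_trichotomy s σ with hs | rfl | hs
  · rw [polarize_of_le hs.le, max_eq_right (hf.le_reflect he hg hg0 hσ hμ hs)]
  · rw [polarize_of_le le_rfl, two_mul, add_sub_cancel_right, max_self]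
  · have := hf.le_reflect he hg hg0 hσ hμ (s := 2 * σ - s) (by linarith)
    rw [sub_sub_cancel] at this
    rw [polarize_of_ge hs.le, min_eq_right this]

theorem deriv_deriv (hf : IsDirichletMinimizer g α β f) (hg : Continuous g) (hg0 : ∀ s, 0 < g s)
    (hs : s ∈ Ioo α β) : deriv (deriv f) s = -(dirichletMu1 g α β * (f s * g s)) := by
  have deriv_eq : deriv f =ᶠ[nhds s] fun x => -(dirichletMu1 g α β * dualPotential g f α β x) := by
    filter_upwards [isOpen_Ioo.mem_nhds hs] with x hx using (hf.hasDerivAt hg hg0 hx).deriv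
  rw [deriv_eq.deriv_eq]
  exact ((hasDerivAt_dualPotential hg hf.isDirichletTrial.continuous α β s).const_mul
    (dirichletMu1 g α β)).fun_neg.deriv

end IsDirichletMinimizer

theorem weight_reflect_eq_of_dirichletMu1_eq (hg : Continuous g) (hg0 : ∀ s, 0 < g s)
    (hgσ : ∀ s ≤ σ, g (2 * σ - s) ≤ g s) (hαβ : α < β) (hσ : 2 * σ < α + β)
    (hμ : dirichletMu1 g (2 * σ - β) (2 * σ - α) = dirichletMu1 g α β)
    (hs : s ∈ Ioo (2 * σ - β) (2 * σ - α)) : g (2 * σ - s) = g s := by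
  obtain ⟨f, hf⟩ := exists_isDirichletMinimizer hg hg0 hαβ
  have he := hf.isDirichletMinimizer_polarize hg hgσ hαβ.le hσ.le hμ
  rw [hf.polarize_eq_reflect he hg hg0 hσ hμ] at he
  have hs' : 2 * σ - s ∈ Ioo α β := ⟨by linarith [hs.2], by linarith [hs.1]⟩
  have deriv_deriv_reflect :
      deriv (deriv fun x => f (2 * σ - x)) s = deriv (deriv f) (2 * σ - s) := by
    simp only [funext (deriv_comp_const_sub f (2 * σ)), deriv.fun_neg,
      deriv_comp_const_sub (deriv f), neg_neg]
  rw [he.deriv_deriv hg hg0 hs, hf.deriv_deriv hg hg0 hs', hμ, neg_inj] at deriv_deriv_reflect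
  exact (mul_left_cancel₀ (hf.pos hg hg0 hs').ne'
    (mul_left_cancel₀ hf.dirichletMu1_pos.ne' deriv_deriv_reflect)).symm

end Polarization

section Translation

variable {g : ℝ → ℝ} {α β σ d : ℝ}

theorem apply_abs_of_even (heven : Function.Even g) (x : ℝ) : g |x| = g x := by
  rcases abs_choice x with h | h <;> rw [h]
  exact heven x

theorem reflect_le_of_even_of_antitoneOn (heven : Function.Even g)
    (hanti : AntitoneOn g (Ici 0)) (hσ : 0 ≤ σ) {s : ℝ} (hs : s ≤ σ) : g (2 * σ - s) ≤ g s := by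
  rw [← apply_abs_of_even heven s]
  exact hanti (abs_nonneg s) (mem_Ici.2 (by linarith)) (abs_le.2 ⟨by linarith, by linarith⟩)

theorem hasDerivWithinAt_zero_of_reflect_eq (heven : Function.Even g)
    (hanti : AntitoneOn g (Ici 0)) (hαβ : 0 < α + β) (hσ : α + β ≤ 2 * σ)
    (hsymm : ∀ s ∈ Ioo α β, g (2 * σ - s) = g s) {x : ℝ} (hx : x ∈ Ioo α β) (hx0 : 0 ≤ x) :
    HasDerivWithinAt g 0 (Ici x) x := by
  obtain ⟨hαx, hxβ⟩ := hx
  -- Choose `s` with `|s| ≤ x < 2 * σ - s`: as `g` agrees at `s` and `2 * σ - s`, monotonicity makes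
  -- it constant between `|s|` and `2 * σ - s`.
  obtain ⟨t, hαt, ht⟩ : ∃ t, α < t ∧ t < min x (2 * σ - x) :=
    exists_between (lt_min hαx (by linarith))
  obtain ⟨s, hαs, hs, hs_reflect⟩ : ∃ s, α < s ∧ |s| ≤ x ∧ s < 2 * σ - x :=
    ⟨max t (-x), lt_max_of_lt_left hαt,
      abs_le.2 ⟨le_max_right _ _, max_le (ht.trans_le (min_le_left _ _)).le (by linarith)⟩,
      max_lt (ht.trans_le (min_le_right _ _)) (by linarith)⟩
  have apply_eq : ∀ y ∈ Ico x (2 * σ - s), g y = g |s| := fun y hy => by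
    have hy0 : 0 ≤ y := hx0.trans hy.1
    refine le_antisymm (hanti (abs_nonneg s) hy0 (hs.trans hy.1)) ?_
    rw [apply_abs_of_even heven, ← hsymm s ⟨hαs, ((le_abs_self s).trans hs).trans_lt hxβ⟩]
    exact hanti hy0 (hy0.trans hy.2.le) hy.2.le
  have hx_reflect : x < 2 * σ - s := by linarith
  refine (hasDerivWithinAt_const x (Ici x) (g |s|)).congr_of_eventuallyEq ?_
    (apply_eq x ⟨le_rfl, hx_reflect⟩)
  filter_upwards [Ico_mem_nhdsGE hx_reflect] using apply_eq

theorem eq_of_reflect_eq (hg : Continuous g) (heven : Function.Even g)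
    (hanti : AntitoneOn g (Ici 0)) (hαβ : 0 < α + β) (hσ : α + β ≤ 2 * σ)
    (hsymm : ∀ s ∈ Ioo α β, g (2 * σ - s) = g s) {x y : ℝ} (hx : x ∈ Ioo α β)
    (hy : y ∈ Ioo α β) : g x = g y := by
  have abs_mem : ∀ z ∈ Ioo α β, |z| ∈ Ioo α β := fun z hz =>
    ⟨hz.1.trans_le (le_abs_self z), abs_lt.2 ⟨by linarith [hz.1], hz.2⟩⟩
  rw [← apply_abs_of_even heven x, ← apply_abs_of_even heven y]
  wlog hxy : |x| ≤ |y| generalizing x y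
  · exact (this hy hx (le_of_not_ge hxy)).symm
  refine (constant_of_has_deriv_right_zero hg.continuousOn (fun z hz => ?_) _
    (right_mem_Icc.2 hxy)).symm
  exact hasDerivWithinAt_zero_of_reflect_eq heven hanti hαβ hσ hsymm
    ⟨(abs_mem x hx).1.trans_le hz.1, hz.2.trans (abs_mem y hy).2⟩ ((abs_nonneg x).trans hz.1)

theorem monotoneOn_dirichletMu1_translate (hg : Continuous g) (hg0 : ∀ s, 0 < g s)
    (heven : Function.Even g) (hanti : AntitoneOn g (Ici 0)) (hd : 0 < d) :
    MonotoneOn (fun α => dirichletMu1 g α (α + d)) (Ici (-d / 2)) := by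
  intro α₁ hα₁ α₂ hα₂ hα
  rw [mem_Ici] at hα₁ hα₂
  have h := dirichletMu1_reflect_le (σ := (α₁ + α₂ + d) / 2) hg hg0
    (fun s hs => reflect_le_of_even_of_antitoneOn heven hanti (by linarith) hs)
    (lt_add_of_pos_right α₂ hd) (by linarith)
  ring_nf at h ⊢
  exact h

theorem dirichletMu1_translate_lt (hg : Continuous g) (hg0 : ∀ s, 0 < g s)
    (heven : Function.Even g) (hanti : AntitoneOn g (Ici 0)) (hd : 0 < d) {α₁ α₂ : ℝ}
    (hα₁ : -d / 2 < α₁) (hα : α₁ < α₂) (hconst : ¬∃ C, ∀ s ∈ Ioo α₁ (α₁ + d), g s = C) :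
    dirichletMu1 g α₁ (α₁ + d) < dirichletMu1 g α₂ (α₂ + d) := by
  refine (monotoneOn_dirichletMu1_translate hg hg0 heven hanti hd hα₁.le (hα₁.trans hα).le
    hα.le).lt_of_ne fun hμ => hconst ⟨g (α₁ + d / 2), fun s hs => ?_⟩
  obtain ⟨σ, hσ⟩ : ∃ σ, 2 * σ = α₁ + α₂ + d := ⟨(α₁ + α₂ + d) / 2, by ring⟩
  have left_eq : 2 * σ - (α₂ + d) = α₁ := by rw [hσ]; ring
  have right_eq : 2 * σ - α₂ = α₁ + d := by rw [hσ]; ring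
  refine eq_of_reflect_eq (σ := σ) hg heven hanti (by linarith) (by linarith) (fun r hr => ?_) hs
    ⟨by linarith, by linarith⟩
  refine weight_reflect_eq_of_dirichletMu1_eq hg hg0
    (fun s hs => reflect_le_of_even_of_antitoneOn heven hanti (by linarith) hs)
    (lt_add_of_pos_right α₂ hd) (by linarith) ?_ ?_ <;> rw [left_eq, right_eq]
  exacts [hμ, hr]

end Translation

section MassCoordinate

variable {q : ℝ → ℝ} {e : ℝ ≃o ℝ}

theorem exists_orderIso_hasDerivAt (hq : Continuous q) {m : ℝ} (hm : 0 < m)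
    (hmq : ∀ x, m ≤ q x) : ∃ e : ℝ ≃o ℝ, (∀ x, HasDerivAt e (q x) x) ∧ e 0 = 0 := by
  set Q : ℝ → ℝ := fun x => ∫ t in (0 : ℝ)..x, q t
  have hQ : ∀ x, HasDerivAt Q (q x) x := fun x => (hq.integral_hasStrictDerivAt 0 x).hasDerivAt
  have hmono : StrictMono Q := strictMono_of_hasDerivAt_pos hQ fun x => hm.trans_le (hmq x)
  have growth : ∀ x y, x ≤ y → m * (y - x) ≤ Q y - Q x := fun x y hxy =>
    mul_sub_le_image_sub_of_le_deriv (fun x => (hQ x).differentiableAt)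
      (fun x => (hmq x).trans_eq (hQ x).deriv.symm) hxy
  have hQ0 : Q 0 = 0 := intervalIntegral.integral_same
  have hsurj : Function.Surjective Q := by
    refine (continuous_iff_continuousAt.2 fun x => (hQ x).continuousAt).surjective ?_ ?_
    · refine Filter.tendsto_atTop_mono' _ ?_ (Filter.tendsto_id.const_mul_atTop hm)
      filter_upwards [Filter.eventually_ge_atTop 0] with x hx
      simpa only [id_eq, sub_zero, hQ0] using growth 0 x hx
    · refine Filter.tendsto_atBot_mono' _ ?_ (Filter.tendsto_id.const_mul_atBot hm)
      filter_upwards [Filter.eventually_le_atBot 0] with x hx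
      simpa only [id_eq, zero_sub, hQ0, mul_neg, neg_le_neg_iff] using growth x 0 hx
  exact ⟨hmono.orderIsoOfSurjective Q hsurj, hQ, hQ0⟩

theorem integral_eq_orderIso_sub (hq : Continuous q) (he : ∀ x, HasDerivAt e (q x) x) (a b : ℝ) :
    ∫ t in a..b, q t = e b - e a :=
  intervalIntegral.integral_eq_sub_of_hasDerivAt (fun x _ => he x) (hq.intervalIntegrable a b)

theorem odd_orderIso (hq : Continuous q) (heven : Function.Even q)
    (he : ∀ x, HasDerivAt e (q x) x) (he0 : e 0 = 0) : Function.Odd e := by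
  intro x
  have h := intervalIntegral.integral_comp_neg (a := 0) (b := x) q
  simp only [heven _, neg_zero, integral_eq_orderIso_sub hq he, he0] at h
  linarith

theorem orderIso_neg_eq_of_integral_eq (hq : Continuous q) (he : ∀ x, HasDerivAt e (q x) x)
    (he_odd : Function.Odd e) {c d : ℝ} (hc : ∫ t in (-c)..c, q t = d) : e (-c) = -d / 2 := by
  rw [integral_eq_orderIso_sub hq he, he_odd] at hc
  rw [he_odd]
  linarith

theorem contDiff_orderIso (hq : Continuous q) (he : ∀ x, HasDerivAt e (q x) x) :
    ContDiff ℝ 1 e :=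
  contDiff_one_iff_deriv.2 ⟨fun x => (he x).differentiableAt, (funext fun x => (he x).deriv) ▸ hq⟩

theorem contDiff_orderIso_symm (hq : Continuous q) (hq0 : ∀ x, q x ≠ 0)
    (he : ∀ x, HasDerivAt e (q x) x) : ContDiff ℝ 1 e.symm := by
  have hderiv : ∀ s, HasDerivAt e.symm (q (e.symm s))⁻¹ s := fun s =>
    .of_local_left_inverse e.symm.continuous.continuousAt (he (e.symm s)) (hq0 _)
      (.of_forall e.apply_symm_apply)
  refine contDiff_one_iff_deriv.2 ⟨fun s => (hderiv s).differentiableAt, ?_⟩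
  rw [funext fun s => (hderiv s).deriv]
  exact (hq.comp e.symm.continuous).inv₀ fun s => hq0 _

/-- The weight `1 / q²` of the dual Dirichlet problem, as a function of the mass coordinate `e`, a
primitive of `q`. -/
noncomputable def massWeight (q : ℝ → ℝ) (e : ℝ ≃o ℝ) (s : ℝ) : ℝ :=
  1 / q (e.symm s) ^ 2

theorem massWeight_pos (hq0 : ∀ x, q x ≠ 0) (s : ℝ) : 0 < massWeight q e s :=
  one_div_pos.2 (sq_pos_of_ne_zero (hq0 _))

theorem continuous_massWeight (hq : Continuous q) (hq0 : ∀ x, q x ≠ 0) :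
    Continuous (massWeight q e) :=
  continuous_const.div₀ ((hq.comp e.symm.continuous).pow 2) fun _ => pow_ne_zero 2 (hq0 _)

theorem massWeight_even (heven : Function.Even q) (he : Function.Odd e) :
    Function.Even (massWeight q e) := by
  intro s
  have symm_neg : e.symm (-s) = -e.symm s := by
    rw [e.symm_apply_eq, he, e.apply_symm_apply]
  rw [massWeight, symm_neg, heven, massWeight]

theorem antitoneOn_massWeight (hqpos : ∀ x, 0 < q x) (hmono : MonotoneOn q (Ici 0))
    (he : Function.Odd e) : AntitoneOn (massWeight q e) (Ici 0) := by
  intro s hs t ht hst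
  have symm_nonneg : ∀ r ∈ Ici (0 : ℝ), e.symm r ∈ Ici 0 := fun r hr =>
    e.symm_apply_eq.2 he.map_zero.symm ▸ e.symm.monotone hr
  exact one_div_le_one_div_of_le (pow_pos (hqpos _) 2) (pow_le_pow_left₀ (hqpos _).le
    (hmono (symm_nonneg s hs) (symm_nonneg t ht) (e.symm.monotone hst)) 2)

theorem sqrt_inv_massWeight_apply (hqpos : ∀ x, 0 < q x) (x : ℝ) :
    √(massWeight q e (e x))⁻¹ = q x := by
  rw [massWeight, e.symm_apply_apply, one_div, inv_inv, Real.sqrt_sq (hqpos x).le]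

theorem integral_orderIso_eq (hq : Continuous q) (he : ∀ x, HasDerivAt e (q x) x) {F : ℝ → ℝ}
    (hF : Continuous F) (a b : ℝ) :
    ∫ s in (e a)..(e b), F s = ∫ x in a..b, F (e x) * q x :=
  (intervalIntegral.integral_comp_mul_deriv (fun x _ => he x) hq.continuousOn hF).symm

theorem integral_deriv_sq_div_massWeight (hq : Continuous q) (hq0 : ∀ x, q x ≠ 0)
    (he : ∀ x, HasDerivAt e (q x) x) {v : ℝ → ℝ} (hv : ContDiff ℝ 1 v) (a b : ℝ) :
    ∫ s in (e a)..(e b), deriv v s ^ 2 / massWeight q e s =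
      ∫ x in a..b, deriv (fun x => v (e x)) x ^ 2 * q x := by
  have deriv_comp : ∀ x, deriv (fun x => v (e x)) x = deriv v (e x) * q x := fun x =>
    ((hv.differentiable one_ne_zero (e x)).hasDerivAt.comp x (he x)).deriv
  rw [integral_orderIso_eq hq he (F := fun s => deriv v s ^ 2 / massWeight q e s)
    (((hv.continuous_deriv le_rfl).pow 2).div (continuous_massWeight hq hq0)
      fun s => (massWeight_pos hq0 s).ne')]
  simp only [deriv_comp, massWeight, e.symm_apply_apply, div_div_eq_mul_div, div_one, mul_pow]

theorem neumannMu1_eq_massNeumannMu1 (hq : Continuous q) (hq0 : ∀ x, q x ≠ 0)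
    (he : ∀ x, HasDerivAt e (q x) x) (a b : ℝ) :
    neumannMu1 q a b = massNeumannMu1 (massWeight q e) (e a) (e b) := by
  have norm_eq : ∀ v : ℝ → ℝ, ContDiff ℝ 1 v →
      ∫ s in (e a)..(e b), v s ^ 2 = ∫ x in a..b, v (e x) ^ 2 * q x := fun v hv =>
    integral_orderIso_eq hq he (hv.continuous.pow 2) a b
  unfold neumannMu1 massNeumannMu1
  congr 1
  ext μ
  constructor
  · rintro ⟨u, hu, hpos, hmean, rfl⟩
    have hv : ContDiff ℝ 1 fun s => u (e.symm s) := hu.comp (contDiff_orderIso_symm hq hq0 he)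
    refine ⟨_, hv, ?_⟩
    rw [norm_eq _ hv, integral_orderIso_eq hq he hv.continuous,
      integral_deriv_sq_div_massWeight hq hq0 he hv]
    simpa only [e.symm_apply_apply, and_true] using ⟨hpos, hmean⟩
  · rintro ⟨v, hv, hpos, hmean, rfl⟩
    rw [norm_eq v hv] at hpos ⊢
    rw [integral_orderIso_eq hq he hv.continuous] at hmean
    rw [integral_deriv_sq_div_massWeight hq hq0 he hv]
    exact ⟨_, hv.comp (contDiff_orderIso hq he), hpos, hmean, rfl⟩

theorem neumannMu1_eq_dirichletMu1 (hq : Continuous q) (hq0 : ∀ x, q x ≠ 0)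
    (he : ∀ x, HasDerivAt e (q x) x) {a b d : ℝ} (hd : 0 < d) (hab : ∫ t in a..b, q t = d) :
    neumannMu1 q a b = dirichletMu1 (massWeight q e) (e a) (e a + d) := by
  rw [integral_eq_orderIso_sub hq he, sub_eq_iff_eq_add'] at hab
  rw [neumannMu1_eq_massNeumannMu1 hq hq0 he, hab, massNeumannMu1_eq_dirichletMu1
    (continuous_massWeight hq hq0) (massWeight_pos hq0) (lt_add_of_pos_right _ hd)]

theorem exists_orderIso_hasDerivAt_odd (hq : Continuous q) (hqpos : ∀ x, 0 < q x)
    (heven : Function.Even q) (hmono : MonotoneOn q (Ici 0)) :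
    ∃ e : ℝ ≃o ℝ, (∀ x, HasDerivAt e (q x) x) ∧ Function.Odd e := by
  obtain ⟨e, he, he0⟩ := exists_orderIso_hasDerivAt hq (hqpos 0) fun x =>
    apply_abs_of_even heven x ▸ hmono self_mem_Ici (abs_nonneg x) (abs_nonneg x)
  exact ⟨e, he, odd_orderIso hq heven he he0⟩

theorem neumannMu1_le_of_integral_eq (hq : Continuous q) (hqpos : ∀ x, 0 < q x)
    (heven : Function.Even q) (hmono : MonotoneOn q (Ici 0)) {a₁ a₂ b₁ b₂ c d : ℝ} (hd : 0 < d)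
    (hc : ∫ t in (-c)..c, q t = d) (h₁ : ∫ t in a₁..b₁, q t = d) (h₂ : ∫ t in a₂..b₂, q t = d)
    (hca : -c ≤ a₁) (ha : a₁ ≤ a₂) : neumannMu1 q a₁ b₁ ≤ neumannMu1 q a₂ b₂ := by
  obtain ⟨e, he, e_odd⟩ := exists_orderIso_hasDerivAt_odd hq hqpos heven hmono
  have hq0 : ∀ x, q x ≠ 0 := fun x => (hqpos x).ne'
  have e_c := orderIso_neg_eq_of_integral_eq hq he e_odd hc
  rw [neumannMu1_eq_dirichletMu1 hq hq0 he hd h₁, neumannMu1_eq_dirichletMu1 hq hq0 he hd h₂]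
  exact monotoneOn_dirichletMu1_translate (continuous_massWeight hq hq0) (massWeight_pos hq0)
    (massWeight_even heven e_odd) (antitoneOn_massWeight hqpos hmono e_odd) hd
    (e_c ▸ e.monotone hca) (e_c ▸ e.monotone (hca.trans ha)) (e.monotone ha)

theorem neumannMu1_lt_of_integral_eq (hq : Continuous q) (hqpos : ∀ x, 0 < q x)
    (heven : Function.Even q) (hmono : MonotoneOn q (Ici 0)) {a₁ a₂ b₁ b₂ c d : ℝ} (hd : 0 < d)
    (hc : ∫ t in (-c)..c, q t = d) (h₁ : ∫ t in a₁..b₁, q t = d) (h₂ : ∫ t in a₂..b₂, q t = d)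
    (hca : -c < a₁) (ha : a₁ < a₂) (hconst : ¬∃ C, ∀ x ∈ Ioo a₁ b₁, q x = C) :
    neumannMu1 q a₁ b₁ < neumannMu1 q a₂ b₂ := by
  obtain ⟨e, he, e_odd⟩ := exists_orderIso_hasDerivAt_odd hq hqpos heven hmono
  have hq0 : ∀ x, q x ≠ 0 := fun x => (hqpos x).ne'
  have e_c := orderIso_neg_eq_of_integral_eq hq he e_odd hc
  have e_b : e b₁ = e a₁ + d := by
    rwa [integral_eq_orderIso_sub hq he, sub_eq_iff_eq_add'] at h₁
  rw [neumannMu1_eq_dirichletMu1 hq hq0 he hd h₁, neumannMu1_eq_dirichletMu1 hq hq0 he hd h₂]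
  refine dirichletMu1_translate_lt (continuous_massWeight hq hq0) (massWeight_pos hq0)
    (massWeight_even heven e_odd) (antitoneOn_massWeight hqpos hmono e_odd) hd
    (e_c ▸ e.strictMono hca) (e.strictMono ha) ?_
  rintro ⟨C, hC⟩
  refine hconst ⟨√C⁻¹, fun x hx => ?_⟩
  rw [← hC (e x) ⟨e.strictMono hx.1, e_b ▸ e.strictMono hx.2⟩, sqrt_inv_massWeight_apply hqpos]

end MassCoordinate

theorem stmt_1_general (q : ℝ → ℝ) (hq : Continuous q) (hqpos : ∀ x, 0 < q x)
    (hqeven : ∀ x, q (-x) = q x) (hqmono : MonotoneOn q (Ici 0)) (d : ℝ) (hd : 0 < d)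
    (abar : ℝ) (habar : ∫ t in (-abar)..abar, q t = d) (b : ℝ → ℝ)
    (hb : ∀ a : ℝ, ENNReal.ofReal d < (∫⁻ t in Ioi a, ENNReal.ofReal (q t)) →
      (∫ t in a..(b a), q t) = d) :
    (∀ a₁ a₂ : ℝ, -abar ≤ a₁ → a₁ ≤ a₂ →
      ENNReal.ofReal d < (∫⁻ t in Ioi a₂, ENNReal.ofReal (q t)) →
      neumannMu1 q a₁ (b a₁) ≤ neumannMu1 q a₂ (b a₂)) ∧
    (∀ a₁ a₂ : ℝ, -abar < a₁ → a₁ < a₂ →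
      ENNReal.ofReal d < (∫⁻ t in Ioi a₂, ENNReal.ofReal (q t)) →
      (¬ ∃ C : ℝ, ∀ x ∈ Ioo a₁ (b a₁), q x = C) →
      neumannMu1 q a₁ (b a₁) < neumannMu1 q a₂ (b a₂)) := by
  have mass_eq : ∀ {a a'}, a ≤ a' → ENNReal.ofReal d < (∫⁻ t in Ioi a', ENNReal.ofReal (q t)) →
      ∫ t in a..(b a), q t = d := fun h ha' =>
    hb _ (ha'.trans_le (lintegral_mono_set (Ioi_subset_Ioi h)))
  exact ⟨fun a₁ a₂ ha₁ ha ha₂ => neumannMu1_le_of_integral_eq hq hqpos hqeven hqmono hd habar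
      (mass_eq ha ha₂) (mass_eq le_rfl ha₂) ha₁ ha,
    fun a₁ a₂ ha₁ ha ha₂ => neumannMu1_lt_of_integral_eq hq hqpos hqeven hqmono hd habar
      (mass_eq ha.le ha₂) (mass_eq le_rfl ha₂) ha₁ ha⟩

/-- Theorem 1.1 (ii)-(iii), increasing case: if `q` is a positive, even `C²` weight
with `q' ≥ 0` on `[0,∞)`, `d ∈ (0, c)` where `c = ∫_ℝ q`, `ā > 0` satisfies
`∫_{-ā}^{ā} q = d`, and `b(a)` is the unique real with `∫_a^{b(a)} q = d`
(defined whenever `∫_a^∞ q > d`, i.e. `a < a₊`), then `a ↦ μ₁((a,b(a));q)` is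
nondecreasing on `[-ā, a₊)`, and strictly increasing from any `a₁ ∈ (-ā, a₊)`
on whose interval `(a₁, b(a₁))` the weight `q` is not constant. -/
theorem stmt_1 (q : ℝ → ℝ) (hq : ContDiff ℝ 2 q) (hqpos : ∀ x, 0 < q x)
    (hqeven : ∀ x, q (-x) = q x) (hq' : ∀ x, 0 ≤ x → 0 ≤ deriv q x)
    (d : ℝ) (hd : 0 < d)
    (hdc : ENNReal.ofReal d < ∫⁻ t, ENNReal.ofReal (q t))
    (abar : ℝ) (habar : 0 < abar) (habar2 : (∫ t in (-abar)..abar, q t) = d)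
    (b : ℝ → ℝ)
    (hb : ∀ a : ℝ, ENNReal.ofReal d < (∫⁻ t in Set.Ioi a, ENNReal.ofReal (q t)) →
      (∫ t in a..(b a), q t) = d) :
    (∀ a₁ a₂ : ℝ, -abar ≤ a₁ → a₁ ≤ a₂ →
      ENNReal.ofReal d < (∫⁻ t in Set.Ioi a₂, ENNReal.ofReal (q t)) →
      neumannMu1 q a₁ (b a₁) ≤ neumannMu1 q a₂ (b a₂)) ∧
    (∀ a₁ a₂ : ℝ, -abar < a₁ → a₁ < a₂ →
      ENNReal.ofReal d < (∫⁻ t in Set.Ioi a₂, ENNReal.ofReal (q t)) →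
      (¬ ∃ C : ℝ, ∀ x ∈ Set.Ioo a₁ (b a₁), q x = C) →
      neumannMu1 q a₁ (b a₁) < neumannMu1 q a₂ (b a₂)) :=
  stmt_1_general q hq.continuous hqpos hqeven (monotoneOn_of_deriv_nonneg (convex_Ici 0)
    hq.continuous.continuousOn (hq.differentiable two_ne_zero).differentiableOn
    fun x hx => hq' x (interior_subset hx)) d hd abar habar2 b hb
end

section
/- Let q ∈ C²(ℝ) with q(x) > 0 for all x ∈ ℝ, q even, and q'(x) ≤ 0 for all x ≥ 0. Fix d ∈ (0, c) where c = ∫_ℝ q(t) dt ∈ (0, +∞]. Let ā > 0 be the unique positive number with ∫_{−ā}^{ā} q(t) dt = d; if c < +∞ let a₊ be defined by ∫_{a₊}^{+∞} q(t) dt = d, otherwise a₊ = +∞. For a < a₊ let b(a) be the unique real with ∫_a^{b(a)} q(t) dt = d and set μ₁(a) := μ₁((a, b(a)); q). Then: (a) μ₁ is nonincreasing on [−ā, a₊), i.e. μ₁(a₁) ≥ μ₁(a₂) whenever −ā ≤ a₁ ≤ a₂ < a₊; (b) if moreover q is not constant on the interval (a₁, b(a₁)) for some a₁ ∈ (−ā,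 a₊), then μ₁(a₁) > μ₁(a₂) for every a₂ with a₁ < a₂ < a₊. -/
open MeasureTheory Set

/-!
The flux `w = u' q` of a first Neumann eigenfunction `u` is a Dirichlet ground state for the
weight `1 / q`. In the mass coordinate `s = ∫₀ˣ q` its equation becomes `w'' + μ ρ w = 0` on an
interval of fixed length `d`, where `ρ = q⁻²` is even and nondecreasing on `[0, ∞)`. Sliding the
interval to the right amounts to replacing `ρ` by `ρ (· + h)` on the same interval, so with the
old ground state `w` as trial function it is enough that `∫ w² (ρ (· + h) - ρ) ≥ 0`. The difference
of densities is odd about `-h / 2` and nonnegative to its right, so the integral folds about that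
point. The folded integrand is nonnegative because `w` is larger on the side of the longer half
of the interval, which follows from the Wronskian of `w` and its reflection `w (-·)`.
The Prüfer angle produces the ground states, and Picone's identity shows that they minimise the
Rayleigh quotient.
-/

section Primitive

variable {V f : ℝ → ℝ} {a b : ℝ}

lemma exists_contDiff_primitive (hab : a ≤ b) (hf : ContinuousOn f (Icc a b)) (c : ℝ) :
    ∃ u : ℝ → ℝ, ContDiff ℝ 1 u ∧ u a = c ∧ ∀ x ∈ Icc a b, HasDerivAt u (f x) x := by
  set g : ℝ → ℝ := IccExtend hab ((Icc a b).domRestrict f)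
  have hg : Continuous g := hf.domRestrict.Icc_extend'
  have hu : ∀ x, HasDerivAt (fun x => c + ∫ t in a..x, g t) (g x) x := fun x =>
    (hg.integral_hasStrictDerivAt a x).hasDerivAt.const_add c
  have hderiv : deriv (fun x => c + ∫ t in a..x, g t) = g := funext fun x => (hu x).deriv
  refine ⟨fun x => c + ∫ t in a..x, g t, ?_, by simp, fun x hx => ?_⟩
  · rw [contDiff_one_iff_deriv, hderiv]
    exact ⟨fun x => (hu x).differentiableAt, hg⟩
  · have hgx : g x = f x := IccExtend_of_mem hab _ hx
    exact hgx ▸ hu x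

lemma exists_contDiff_eqOn_Icc (hab : a ≤ b) (hf : ContinuousOn f (Icc a b))
    (hV : ∀ x ∈ Icc a b, HasDerivAt V (f x) x) :
    ∃ u : ℝ → ℝ, ContDiff ℝ 1 u ∧ EqOn u V (Icc a b) ∧ EqOn (deriv u) f (Icc a b) := by
  obtain ⟨u, hu, hua, hderiv⟩ := exists_contDiff_primitive hab hf (V a)
  refine ⟨u, hu, ?_, fun x hx => (hderiv x hx).deriv⟩
  exact eq_of_has_deriv_right_eq
    (fun x hx => (hderiv x (Ico_subset_Icc_self hx)).hasDerivWithinAt)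
    (fun x hx => (hV x (Ico_subset_Icc_self hx)).hasDerivWithinAt)
    hu.continuous.continuousOn (HasDerivAt.continuousOn hV) hua

end Primitive

/-- The right-hand side of the phase equation `θ' = κ (p cos² θ + σ sin² θ)`, obtained from the
system `w' = κ p v`, `v' = -κ σ w` by the Prüfer substitution `w = r sin θ`, `v = r cos θ`. -/
noncomputable def pruferField (p σ : ℝ → ℝ) (κ t θ : ℝ) : ℝ :=
  κ * (p t * Real.cos θ ^ 2 + σ t * Real.sin θ ^ 2)

/-- `θ` is the Prüfer phase on `[A, B]` with frequency `κ` that vanishes at `A`. The derivative is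
two-sided also at the endpoints. -/
structure IsPruferAngle (p σ : ℝ → ℝ) (A B κ : ℝ) (θ : ℝ → ℝ) : Prop where
  left_eq_zero : θ A = 0
  hasDerivAt : ∀ t ∈ Icc A B, HasDerivAt θ (pruferField p σ κ t (θ t)) t

section Prufer

variable {p σ : ℝ → ℝ}

lemma abs_pruferField_le (p σ : ℝ → ℝ) (κ t x : ℝ) :
    |pruferField p σ κ t x| ≤ |κ| * (|p t| + |σ t|) := by
  rw [pruferField, abs_mul]
  gcongr
  refine (abs_add_le _ _).trans ?_
  rw [abs_mul, abs_mul, abs_sq, abs_sq]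
  gcongr
  · exact mul_le_of_le_one_right (abs_nonneg _) (Real.cos_sq_le_one x)
  · exact mul_le_of_le_one_right (abs_nonneg _) (Real.sin_sq_le_one x)

lemma mul_le_pruferField {m κ t : ℝ} (hκ : 0 ≤ κ) (hp : m ≤ p t) (hσ : m ≤ σ t) (x : ℝ) :
    κ * m ≤ pruferField p σ κ t x := by
  refine mul_le_mul_of_nonneg_left ?_ hκ
  calc m = m * Real.cos x ^ 2 + m * Real.sin x ^ 2 := by
        rw [← mul_add, Real.cos_sq_add_sin_sq, mul_one]
    _ ≤ p t * Real.cos x ^ 2 + σ t * Real.sin x ^ 2 := by gcongr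

lemma abs_pruferField_sub_le (p σ : ℝ → ℝ) (κ t x y : ℝ) :
    |pruferField p σ κ t x - pruferField p σ κ t y| ≤ |κ| * (|p t| + |σ t|) * |x - y| := by
  have hdouble : pruferField p σ κ t x - pruferField p σ κ t y
      = κ * (p t - σ t) * ((Real.cos (2 * x) - Real.cos (2 * y)) / 2) := by
    simp only [pruferField, Real.cos_sq, Real.sin_sq_eq_half_sub]
    ring
  have hcos : |(Real.cos (2 * x) - Real.cos (2 * y)) / 2| ≤ |x - y| := by
    have h := Real.abs_cos_sub_cos_le (2 * x) (2 * y)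
    rw [← mul_sub, abs_mul, abs_two] at h
    rw [abs_div, abs_two]
    linarith
  rw [hdouble, abs_mul, abs_mul]
  gcongr
  exact abs_sub _ _

lemma exists_isPruferAngle (hp : Continuous p) (hσ : Continuous σ) {A B : ℝ} (hAB : A ≤ B)
    (κ : ℝ) : ∃ θ, IsPruferAngle p σ A B κ θ := by
  obtain ⟨M, hM⟩ := (isCompact_Icc (a := A - 1) (b := B + 1)).exists_bound_of_continuousOn
    (f := fun t => |p t| + |σ t|) (by fun_prop)
  have hM : ∀ t ∈ Icc (A - 1) (B + 1), |p t| + |σ t| ≤ M := fun t ht =>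
    (le_abs_self _).trans (hM t ht)
  have hA : A ∈ Icc (A - 1) (B + 1) := ⟨by linarith, by linarith⟩
  have hM0 : 0 ≤ M := (by positivity : 0 ≤ |p A| + |σ A|).trans (hM A hA)
  let L : NNReal := ⟨|κ| * M, by positivity⟩
  let R : NNReal := L * ⟨B - A + 1, by linarith⟩
  have hPL : IsPicardLindelof (pruferField p σ κ) (⟨A, hA⟩ : Icc (A - 1) (B + 1)) 0 R 0 L L := by
    constructor
    · intro t ht
      refine LipschitzOnWith.of_dist_le_mul fun x _ y _ => ?_
      refine (abs_pruferField_sub_le p σ κ t x y).trans ?_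
      exact mul_le_mul_of_nonneg_right (mul_le_mul_of_nonneg_left (hM t ht) (abs_nonneg κ))
        (abs_nonneg _)
    · intro x _
      unfold pruferField
      fun_prop
    · exact fun t ht x _ => (abs_pruferField_le p σ κ t x).trans
        (mul_le_mul_of_nonneg_left (hM t ht) (abs_nonneg κ))
    · have hmax : max (B + 1 - A) (A - (A - 1)) = B - A + 1 := by
        rw [max_eq_left] <;> linarith
      change (L : ℝ) * max (B + 1 - A) (A - (A - 1)) ≤ R - 0
      rw [hmax]
      exact (sub_zero (R : ℝ)).ge
  obtain ⟨θ, hθA, hθ⟩ := hPL.exists_eq_forall_mem_Icc_hasDerivWithinAt₀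
  refine ⟨θ, hθA, fun t ht => ?_⟩
  exact (hθ t ⟨by linarith [ht.1], by linarith [ht.2]⟩).hasDerivAt
    (Icc_mem_nhds (by linarith [ht.1]) (by linarith [ht.2]))

namespace IsPruferAngle

variable {A B κ κ₁ κ₂ : ℝ} {θ θ₁ θ₂ : ℝ → ℝ}

lemma continuousOn (hθ : IsPruferAngle p σ A B κ θ) : ContinuousOn θ (Icc A B) :=
  HasDerivAt.continuousOn hθ.hasDerivAt

lemma hasDerivWithinAt_Ici (hθ : IsPruferAngle p σ A B κ θ) {t : ℝ} (ht : t ∈ Ico A B) :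
    HasDerivWithinAt θ (pruferField p σ κ t (θ t)) (Ici t) t :=
  (hθ.hasDerivAt t (Ico_subset_Icc_self ht)).hasDerivWithinAt

lemma right_eq_zero (hθ : IsPruferAngle p σ A B 0 θ) (hAB : A ≤ B) : θ B = 0 := by
  rw [← hθ.left_eq_zero]
  refine constant_of_has_deriv_right_zero hθ.continuousOn (fun t ht => ?_) B ⟨hAB, le_rfl⟩
  simpa [pruferField] using hθ.hasDerivWithinAt_Ici ht

lemma mul_le_right {m : ℝ} (hθ : IsPruferAngle p σ A B κ θ) (hAB : A ≤ B) (hκ : 0 ≤ κ)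
    (hp : ∀ t ∈ Icc A B, m ≤ p t) (hσ : ∀ t ∈ Icc A B, m ≤ σ t) :
    κ * m * (B - A) ≤ θ B := by
  have h := Convex.mul_sub_le_image_sub_of_le_deriv (convex_Icc A B) (C := κ * m)
    hθ.continuousOn
    (fun t ht => (hθ.hasDerivAt t (interior_subset ht)).differentiableAt.differentiableWithinAt)
    (fun t ht => by
      have ht := interior_subset ht
      rw [(hθ.hasDerivAt t ht).deriv]
      exact mul_le_pruferField hκ (hp t ht) (hσ t ht) _)
    A ⟨le_rfl, hAB⟩ B ⟨hAB, le_rfl⟩ hAB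
  rwa [hθ.left_eq_zero, sub_zero] at h

lemma strictMonoOn (hθ : IsPruferAngle p σ A B κ θ) (hκ : 0 < κ)
    (hp : ∀ t ∈ Icc A B, 0 < p t) (hσ : ∀ t ∈ Icc A B, 0 < σ t) : StrictMonoOn θ (Icc A B) := by
  refine strictMonoOn_of_deriv_pos (convex_Icc A B) hθ.continuousOn fun t ht => ?_
  have ht := interior_subset ht
  rw [(hθ.hasDerivAt t ht).deriv]
  exact (mul_pos hκ (lt_min (hp t ht) (hσ t ht))).trans_le
    (mul_le_pruferField hκ.le (min_le_left _ _) (min_le_right _ _) _)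

lemma abs_sub_le (h₁ : IsPruferAngle p σ A B κ₁ θ₁) (h₂ : IsPruferAngle p σ A B κ₂ θ₂)
    (hAB : A ≤ B) {M : ℝ} (hM0 : 0 ≤ M) (hM : ∀ t ∈ Icc A B, |p t| + |σ t| ≤ M) :
    |θ₁ B - θ₂ B| ≤ gronwallBound 0 (|κ₁| * M) (|κ₁ - κ₂| * M) (B - A) := by
  have hM : ∀ t ∈ Ico A B, |p t| + |σ t| ≤ M := fun t ht => hM t (Ico_subset_Icc_self ht)
  have hfield_lip : ∀ t ∈ Ico A B,
      LipschitzOnWith ⟨|κ₁| * M, by positivity⟩ (pruferField p σ κ₁ t) univ := fun t ht =>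
    LipschitzOnWith.of_dist_le_mul fun x _ y _ => (abs_pruferField_sub_le p σ κ₁ t x y).trans
      (mul_le_mul_of_nonneg_right (mul_le_mul_of_nonneg_left (hM t ht) (abs_nonneg κ₁))
        (abs_nonneg _))
  have hfield_dist : ∀ t ∈ Ico A B,
      dist (pruferField p σ κ₂ t (θ₂ t)) (pruferField p σ κ₁ t (θ₂ t)) ≤ |κ₁ - κ₂| * M := by
    intro t ht
    have hsub : pruferField p σ κ₁ t (θ₂ t) - pruferField p σ κ₂ t (θ₂ t)
        = pruferField p σ (κ₁ - κ₂) t (θ₂ t) := (sub_mul _ _ _).symm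
    rw [dist_comm, Real.dist_eq, hsub]
    exact (abs_pruferField_le p σ _ t _).trans
      (mul_le_mul_of_nonneg_left (hM t ht) (abs_nonneg _))
  have hgronwall := dist_le_of_approx_trajectories_ODE_of_mem hfield_lip
    h₁.continuousOn (fun t ht => h₁.hasDerivWithinAt_Ici ht) (fun t _ => (dist_self _).le)
    (fun t _ => mem_univ _) h₂.continuousOn (fun t ht => h₂.hasDerivWithinAt_Ici ht) hfield_dist
    (fun t _ => mem_univ _) (by rw [h₁.left_eq_zero, h₂.left_eq_zero, dist_self]) B ⟨hAB, le_rfl⟩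
  rwa [zero_add, Real.dist_eq] at hgronwall

lemma continuous_right (hp : Continuous p) (hσ : Continuous σ) (hAB : A ≤ B) {Θ : ℝ → ℝ → ℝ}
    (hΘ : ∀ κ, IsPruferAngle p σ A B κ (Θ κ)) : Continuous fun κ => Θ κ B := by
  obtain ⟨M, hM⟩ := (isCompact_Icc (a := A) (b := B)).exists_bound_of_continuousOn
    (f := fun t => |p t| + |σ t|) (by fun_prop)
  have hM0 : 0 ≤ M := (norm_nonneg _).trans (hM A ⟨le_rfl, hAB⟩)
  refine continuous_iff_continuousAt.2 fun κ => ?_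
  have hbound : Continuous fun κ' => gronwallBound 0 (|κ| * M) (|κ - κ'| * M) (B - A) :=
    (gronwallBound_continuous_ε 0 (|κ| * M) (B - A)).comp (by fun_prop)
  refine tendsto_iff_dist_tendsto_zero.2 (squeeze_zero (fun _ => dist_nonneg) (fun κ' => ?_)
    (by simpa [gronwallBound_ε0_δ0] using hbound.tendsto κ))
  rw [dist_comm]
  exact (hΘ κ).abs_sub_le (hΘ κ') hAB hM0 fun t ht => (le_abs_self _).trans (hM t ht)

end IsPruferAngle

lemma exists_isPruferAngle_right_eq_pi (hp : Continuous p) (hσ : Continuous σ)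
    (hp0 : ∀ t, 0 < p t) (hσ0 : ∀ t, 0 < σ t) {A B : ℝ} (hAB : A < B) :
    ∃ κ > 0, ∃ θ, IsPruferAngle p σ A B κ θ ∧ θ B = Real.pi := by
  obtain ⟨m, hm, hm'⟩ := isCompact_Icc.exists_forall_le' (s := Icc A B)
    (f := fun t => min (p t) (σ t)) (by fun_prop) (a := 0) fun t _ => lt_min (hp0 t) (hσ0 t)
  choose Θ hΘ using exists_isPruferAngle hp hσ hAB.le
  have hBA : 0 < B - A := sub_pos.2 hAB
  set K := Real.pi / (m * (B - A))
  have hK : 0 ≤ K := by positivity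
  have hΘ0 : Θ 0 B = 0 := (hΘ 0).right_eq_zero hAB.le
  have hΘK : Real.pi ≤ Θ K B := by
    refine le_trans (le_of_eq ?_) ((hΘ K).mul_le_right hAB.le hK
      (fun t ht => (hm' t ht).trans (min_le_left _ _))
      (fun t ht => (hm' t ht).trans (min_le_right _ _)))
    simp only [K]
    field_simp
  obtain ⟨κ, hκ, hκπ⟩ := intermediate_value_Icc hK
    (IsPruferAngle.continuous_right hp hσ hAB.le hΘ).continuousOn
    ⟨hΘ0.trans_le Real.pi_pos.le, hΘK⟩
  have hκ0 : κ ≠ 0 := by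
    rintro rfl
    exact Real.pi_pos.ne (hΘ0.symm.trans hκπ)
  exact ⟨κ, hκ.1.lt_of_ne' hκ0, Θ κ, hΘ κ, hκπ⟩

end Prufer

/-- A positive Dirichlet eigenfunction `w` of `(w' / p)' + κ² σ w = 0` on `[A, B]`, written as a
first-order system with rescaled flux `v = w' / (κ p)`. Derivatives are two-sided also at the
endpoints, and the signs of `v` there record that the zeros of `w` are simple. -/
structure IsDirichletGroundState (p σ : ℝ → ℝ) (A B κ : ℝ) (w v : ℝ → ℝ) : Prop where
  lt : A < B
  freq_pos : 0 < κ
  hasDerivAt_fun : ∀ t ∈ Icc A B, HasDerivAt w (κ * p t * v t) t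
  hasDerivAt_flux : ∀ t ∈ Icc A B, HasDerivAt v (-(κ * σ t * w t)) t
  left_eq_zero : w A = 0
  right_eq_zero : w B = 0
  flux_left_pos : 0 < v A
  flux_right_neg : v B < 0
  pos : ∀ t ∈ Ioo A B, 0 < w t

-- The amplitude is `r = exp ∫ κ (p - σ) sin θ cos θ`.
lemma IsPruferAngle.exists_isDirichletGroundState {p σ θ : ℝ → ℝ} {A B κ : ℝ}
    (hp : Continuous p) (hσ : Continuous σ) (hp0 : ∀ t, 0 < p t) (hσ0 : ∀ t, 0 < σ t)
    (hAB : A < B) (hκ : 0 < κ) (hθ : IsPruferAngle p σ A B κ θ) (hθB : θ B = Real.pi) :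
    ∃ w v, IsDirichletGroundState p σ A B κ w v := by
  set g : ℝ → ℝ := fun t => κ * (p t - σ t) * Real.sin (θ t) * Real.cos (θ t)
  have hg : ContinuousOn g (Icc A B) := by
    have := hθ.continuousOn
    fun_prop
  obtain ⟨logr, -, -, hlogr⟩ := exists_contDiff_primitive hAB.le hg 0
  have hr : ∀ t ∈ Icc A B, HasDerivAt (fun t => Real.exp (logr t)) (Real.exp (logr t) * g t) t :=
    fun t ht => (hlogr t ht).exp
  have hmono := hθ.strictMonoOn hκ (fun t _ => hp0 t) (fun t _ => hσ0 t)
  refine ⟨fun t => Real.exp (logr t) * Real.sin (θ t), fun t => Real.exp (logr t) * Real.cos (θ t),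
    hAB, hκ, fun t ht => ?_, fun t ht => ?_, ?_, ?_, ?_, ?_, fun t ht => ?_⟩
  · refine ((hr t ht).mul (hθ.hasDerivAt t ht).sin).congr_deriv ?_
    simp only [g, pruferField]
    linear_combination κ * p t * Real.exp (logr t) * Real.cos (θ t) *
      Real.sin_sq_add_cos_sq (θ t)
  · refine ((hr t ht).mul (hθ.hasDerivAt t ht).cos).congr_deriv ?_
    simp only [g, pruferField]
    linear_combination -κ * σ t * Real.exp (logr t) * Real.sin (θ t) *
      Real.sin_sq_add_cos_sq (θ t)
  · simp [hθ.left_eq_zero]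
  · simp [hθB]
  · simp [hθ.left_eq_zero, Real.exp_pos]
  · simp [hθB, Real.exp_pos]
  · refine mul_pos (Real.exp_pos _) (Real.sin_pos_of_pos_of_lt_pi ?_ ?_)
    · exact hθ.left_eq_zero ▸ hmono ⟨le_rfl, hAB.le⟩ (Ioo_subset_Icc_self ht) ht.1
    · exact hθB ▸ hmono (Ioo_subset_Icc_self ht) ⟨hAB.le, le_rfl⟩ ht.2

lemma exists_isDirichletGroundState {p σ : ℝ → ℝ} (hp : Continuous p) (hσ : Continuous σ)
    (hp0 : ∀ t, 0 < p t) (hσ0 : ∀ t, 0 < σ t) {A B : ℝ} (hAB : A < B) :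
    ∃ κ w v, IsDirichletGroundState p σ A B κ w v := by
  obtain ⟨κ, hκ, θ, hθ, hθB⟩ := exists_isPruferAngle_right_eq_pi hp hσ hp0 hσ0 hAB
  exact ⟨κ, hθ.exists_isDirichletGroundState hp hσ hp0 hσ0 hAB hκ hθB⟩

lemma continuousAt_sq_mul_div_of_eq_zero {φ v w : ℝ → ℝ} {c φ' w' : ℝ} (hφ : HasDerivAt φ φ' c)
    (hv : ContinuousAt v c) (hw : HasDerivAt w w' c) (hφc : φ c = 0) (hwc : w c = 0)
    (hw' : w' ≠ 0) : ContinuousAt (fun t => φ t ^ 2 * v t / w t) c := by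
  have hlim := ((hφ.continuousAt.mono_left (nhdsWithin_le_nhds (s := {c}ᶜ))).mul
    hφ.tendsto_slope).mul (hv.mono_left nhdsWithin_le_nhds) |>.div hw.tendsto_slope hw'
  have hvalue : φ c * φ' * v c / w' = φ c ^ 2 * v c / w c := by simp [hφc, hwc]
  refine continuousAt_iff_punctured_nhds.2 ((hvalue ▸ hlim).congr' ?_)
  filter_upwards [self_mem_nhdsWithin] with t ht
  have ht : t - c ≠ 0 := sub_ne_zero.2 ht
  simp only [Pi.div_apply, slope_def_field, hφc, hwc, sub_zero]
  by_cases hwt : w t = 0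
  · simp [hwt]
  · field_simp

namespace IsDirichletGroundState

variable {p σ σ₁ σ₂ w v w₁ v₁ w₂ v₂ φ φ' : ℝ → ℝ} {A B κ κ₁ κ₂ : ℝ}

lemma continuousOn_fun (E : IsDirichletGroundState p σ A B κ w v) : ContinuousOn w (Icc A B) :=
  HasDerivAt.continuousOn E.hasDerivAt_fun

lemma continuousOn_flux (E : IsDirichletGroundState p σ A B κ w v) : ContinuousOn v (Icc A B) :=
  HasDerivAt.continuousOn E.hasDerivAt_flux

lemma nonneg (E : IsDirichletGroundState p σ A B κ w v) {t : ℝ} (ht : t ∈ Icc A B) :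
    0 ≤ w t := by
  rcases eq_endpoints_or_mem_Ioo_of_mem_Icc ht with rfl | rfl | ht
  · exact E.left_eq_zero.ge
  · exact E.right_eq_zero.ge
  · exact (E.pos t ht).le

lemma comp {g G p' σ' : ℝ → ℝ} {a b : ℝ}
    (E : IsDirichletGroundState p σ (G a) (G b) κ w v) (hab : a < b)
    (hg : ∀ x ∈ Icc a b, 0 < g x) (hG : ∀ x ∈ Icc a b, HasDerivAt G (g x) x)
    (hp' : ∀ x ∈ Icc a b, p' x = p (G x) * g x) (hσ' : ∀ x ∈ Icc a b, σ' x = σ (G x) * g x) :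
    IsDirichletGroundState p' σ' a b κ (w ∘ G) (v ∘ G) := by
  have hmono : StrictMonoOn G (Icc a b) :=
    strictMonoOn_of_deriv_pos (convex_Icc a b) (HasDerivAt.continuousOn hG) fun x hx => by
      rw [(hG x (interior_subset hx)).deriv]
      exact hg x (interior_subset hx)
  have ha : a ∈ Icc a b := ⟨le_rfl, hab.le⟩
  have hb : b ∈ Icc a b := ⟨hab.le, le_rfl⟩
  have hmem : ∀ x ∈ Icc a b, G x ∈ Icc (G a) (G b) := fun x hx =>
    ⟨hmono.monotoneOn ha hx hx.1, hmono.monotoneOn hx hb hx.2⟩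
  refine ⟨hab, E.freq_pos, fun x hx => ?_, fun x hx => ?_, E.left_eq_zero, E.right_eq_zero,
    E.flux_left_pos, E.flux_right_neg, fun x hx => ?_⟩
  · refine ((E.hasDerivAt_fun _ (hmem x hx)).comp x (hG x hx)).congr_deriv ?_
    rw [hp' x hx, Function.comp_apply]
    ring
  · refine ((E.hasDerivAt_flux _ (hmem x hx)).comp x (hG x hx)).congr_deriv ?_
    rw [hσ' x hx, Function.comp_apply]
    ring
  · have hx' := Ioo_subset_Icc_self hx
    exact E.pos _ ⟨hmono ha hx' hx.1, hmono hx' hb hx.2⟩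

lemma integral_mul_flux_sq (E : IsDirichletGroundState p σ A B κ w v)
    (hp : ContinuousOn p (Icc A B)) (hσ : ContinuousOn σ (Icc A B)) :
    ∫ t in A..B, p t * v t ^ 2 = ∫ t in A..B, σ t * w t ^ 2 := by
  have hpv : IntervalIntegrable (fun t => p t * v t ^ 2) volume A B :=
    (hp.mul (E.continuousOn_flux.pow 2)).intervalIntegrable_of_Icc E.lt.le
  have hσw : IntervalIntegrable (fun t => σ t * w t ^ 2) volume A B :=
    (hσ.mul (E.continuousOn_fun.pow 2)).intervalIntegrable_of_Icc E.lt.le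
  have hderiv : ∀ t ∈ uIcc A B,
      HasDerivAt (fun t => w t * v t) (κ * (p t * v t ^ 2 - σ t * w t ^ 2)) t := by
    intro t ht
    rw [uIcc_of_le E.lt.le] at ht
    exact ((E.hasDerivAt_fun t ht).mul (E.hasDerivAt_flux t ht)).congr_deriv (by ring)
  have h := intervalIntegral.integral_eq_sub_of_hasDerivAt hderiv ((hpv.sub hσw).const_mul κ)
  rw [intervalIntegral.integral_const_mul, intervalIntegral.integral_sub hpv hσw, E.left_eq_zero,
    E.right_eq_zero, zero_mul, zero_mul, sub_zero] at h
  exact sub_eq_zero.1 ((mul_eq_zero.1 h).resolve_left E.freq_pos.ne')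

lemma integral_mul_sq_pos (E : IsDirichletGroundState p σ A B κ w v)
    (hσ : ContinuousOn σ (Icc A B)) (hσ0 : ∀ t ∈ Icc A B, 0 < σ t) :
    0 < ∫ t in A..B, σ t * w t ^ 2 := by
  refine intervalIntegral.integral_pos E.lt (hσ.mul (E.continuousOn_fun.pow 2))
    (fun t ht => mul_nonneg (hσ0 t (Ioc_subset_Icc_self ht)).le (sq_nonneg _)) ?_
  obtain ⟨t, ht⟩ := exists_between E.lt
  exact ⟨t, Ioo_subset_Icc_self ht,
    mul_pos (hσ0 t (Ioo_subset_Icc_self ht)) (pow_pos (E.pos t ht) 2)⟩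

lemma continuousOn_sq_mul_flux_div (E : IsDirichletGroundState p σ A B κ w v)
    (hp0 : ∀ t ∈ Icc A B, 0 < p t) (hφ : ∀ t ∈ Icc A B, HasDerivAt φ (φ' t) t)
    (hφA : φ A = 0) (hφB : φ B = 0) : ContinuousOn (fun t => φ t ^ 2 * v t / w t) (Icc A B) := by
  refine continuousOn_of_forall_continuousAt fun t ht => ?_
  have hv := (E.hasDerivAt_flux t ht).continuousAt
  have hκp := mul_pos E.freq_pos (hp0 t ht)
  rcases eq_endpoints_or_mem_Ioo_of_mem_Icc ht with rfl | rfl | hmem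
  · exact continuousAt_sq_mul_div_of_eq_zero (hφ _ ht) hv (E.hasDerivAt_fun _ ht) hφA
      E.left_eq_zero (mul_pos hκp E.flux_left_pos).ne'
  · exact continuousAt_sq_mul_div_of_eq_zero (hφ _ ht) hv (E.hasDerivAt_fun _ ht) hφB
      E.right_eq_zero (mul_neg_of_pos_of_neg hκp E.flux_right_neg).ne
  · exact (((hφ t ht).continuousAt.pow 2).mul hv).div (E.hasDerivAt_fun t ht).continuousAt
      (E.pos t hmem).ne'

-- Picone: `φ'² / p - κ² σ φ² - (κ φ² v / w)'` is the square `(φ' - κ φ p v / w)² / p`.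
lemma sq_mul_integral_le (E : IsDirichletGroundState p σ A B κ w v)
    (hp : ContinuousOn p (Icc A B)) (hσ : ContinuousOn σ (Icc A B))
    (hp0 : ∀ t ∈ Icc A B, 0 < p t) (hφ : ∀ t ∈ Icc A B, HasDerivAt φ (φ' t) t)
    (hφ' : ContinuousOn φ' (Icc A B)) (hφA : φ A = 0) (hφB : φ B = 0) :
    κ ^ 2 * (∫ t in A..B, σ t * φ t ^ 2) ≤ ∫ t in A..B, φ' t ^ 2 / p t := by
  have hgrad : ContinuousOn (fun t => φ' t ^ 2 / p t) (Icc A B) :=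
    (hφ'.pow 2).div hp fun t ht => (hp0 t ht).ne'
  have hmass : ContinuousOn (fun t => κ ^ 2 * (σ t * φ t ^ 2)) (Icc A B) :=
    (hσ.mul ((HasDerivAt.continuousOn hφ).pow 2)).const_mul _
  have hderiv : ∀ t ∈ Ioo A B, HasDerivAt (fun t => κ * (φ t ^ 2 * v t / w t))
      (φ' t ^ 2 / p t - κ ^ 2 * (σ t * φ t ^ 2)
        - (φ' t - κ * φ t * p t * v t / w t) ^ 2 / p t) t := by
    intro t ht
    have ht' := Ioo_subset_Icc_self ht
    have hwt := (E.pos t ht).ne'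
    have hpt := (hp0 t ht').ne'
    refine (((((hφ t ht').pow 2).mul (E.hasDerivAt_flux t ht')).div (E.hasDerivAt_fun t ht')
      hwt).const_mul κ).congr_deriv ?_
    simp only [Nat.cast_ofNat, Nat.add_one_sub_one, pow_one, Pi.mul_apply, Pi.pow_apply]
    field_simp
    ring
  have hle := intervalIntegral.sub_le_integral_of_hasDeriv_right_of_le E.lt.le
    ((E.continuousOn_sq_mul_flux_div hp0 hφ hφA hφB).const_mul κ)
    (fun t ht => (hderiv t ht).hasDerivWithinAt) (hgrad.fun_sub hmass).integrableOn_Icc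
    (fun t ht => sub_le_self _
      (div_nonneg (sq_nonneg _) (hp0 t (Ioo_subset_Icc_self ht)).le))
  rw [intervalIntegral.integral_sub (hgrad.intervalIntegrable_of_Icc E.lt.le)
    (hmass.intervalIntegrable_of_Icc E.lt.le), intervalIntegral.integral_const_mul,
    E.left_eq_zero, E.right_eq_zero, div_zero, div_zero, sub_self] at hle
  exact sub_nonneg.1 hle

lemma sq_mul_integral_le_sq_mul_integral (E₁ : IsDirichletGroundState p σ₁ A B κ₁ w₁ v₁)
    (E₂ : IsDirichletGroundState p σ₂ A B κ₂ w₂ v₂) (hp : ContinuousOn p (Icc A B))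
    (hp0 : ∀ t ∈ Icc A B, 0 < p t) (hσ₁ : ContinuousOn σ₁ (Icc A B))
    (hσ₂ : ContinuousOn σ₂ (Icc A B)) :
    κ₂ ^ 2 * (∫ t in A..B, σ₂ t * w₁ t ^ 2) ≤ κ₁ ^ 2 * ∫ t in A..B, σ₁ t * w₁ t ^ 2 := by
  refine (E₂.sq_mul_integral_le hp hσ₂ hp0 E₁.hasDerivAt_fun
    ((hp.const_mul κ₁).mul E₁.continuousOn_flux) E₁.left_eq_zero E₁.right_eq_zero).trans_eq ?_
  rw [← E₁.integral_mul_flux_sq hp hσ₁, ← intervalIntegral.integral_const_mul]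
  refine intervalIntegral.integral_congr fun t ht => ?_
  have hpt := (hp0 t (uIcc_of_le E₁.lt.le ▸ ht)).ne'
  field_simp

end IsDirichletGroundState

section Reflection

lemma exists_continuous_eqOn_Icc_of_eq_zero {w : ℝ → ℝ} {A B : ℝ} (hAB : A ≤ B)
    (hw : ContinuousOn w (Icc A B)) (hwA : w A = 0) (hwB : w B = 0) :
    ∃ W, Continuous W ∧ EqOn W w (Icc A B) ∧ ∀ t ∉ Icc A B, W t = 0 := by
  refine ⟨IccExtend hAB ((Icc A B).domRestrict w), hw.domRestrict.Icc_extend',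
    fun t ht => IccExtend_of_mem hAB _ ht, fun t ht => ?_⟩
  rcases lt_or_ge t A with htA | htA
  · exact (IccExtend_of_le_left hAB _ htA.le).trans hwA
  · exact (IccExtend_of_right_le hAB _ (not_le.1 fun htB => ht ⟨htA, htB⟩).le).trans hwB

lemma integral_mul_eq_integral_sub_reflect_mul {f g : ℝ → ℝ} {k : ℝ} (hf : Continuous f)
    (hg : Continuous g) (hgk : ∀ y, g (k - y) = -g y) (b : ℝ) :
    ∫ y in (k - b)..b, f y * g y = ∫ y in (k / 2)..b, (f y - f (k - y)) * g y := by
  have hreflect : ∫ y in (k - b)..(k / 2), f y * g y = -∫ y in (k / 2)..b, f (k - y) * g y := by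
    have h := intervalIntegral.integral_comp_sub_left (fun y => f y * g y) (a := k / 2) (b := b) k
    rw [sub_half] at h
    rw [← h, ← intervalIntegral.integral_neg]
    simp only [hgk, mul_neg]
  have hfg : Continuous fun y => f y * g y := hf.mul hg
  have hfg' : Continuous fun y => f (k - y) * g y := by fun_prop
  rw [← intervalIntegral.integral_add_adjacent_intervals (hfg.intervalIntegrable _ (k / 2))
    (hfg.intervalIntegrable _ _), hreflect, neg_add_eq_sub,
    ← intervalIntegral.integral_sub (hfg.intervalIntegrable _ _) (hfg'.intervalIntegrable _ _)]
  simp only [sub_mul]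

variable {ρ W : ℝ → ℝ} {A B h : ℝ}

lemma apply_abs_of_even_s2 {f : ℝ → ℝ} (hf : f.Even) (x : ℝ) : f |x| = f x := by
  rcases abs_choice x with hx | hx <;> rw [hx]
  exact hf x

lemma le_of_even_of_monotoneOn_of_abs_le (hρ : ρ.Even) (hmono : MonotoneOn ρ (Ici 0)) {x y : ℝ}
    (hxy : |x| ≤ |y|) : ρ x ≤ ρ y := by
  rw [← apply_abs_of_even_s2 hρ x, ← apply_abs_of_even_s2 hρ y]
  exact hmono (abs_nonneg x) (abs_nonneg y) hxy

lemma exists_lt_add_of_not_constant (hcont : Continuous ρ) (hρ : ρ.Even)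
    (hmono : MonotoneOn ρ (Ici 0)) (hAB : 0 ≤ A + B) (hh : 0 < h)
    (hne : ¬ ∃ C, ∀ s ∈ Ioo A B, ρ s = C) :
    ∃ s ∈ Ioo A B, 0 ≤ s ∧ ρ s < ρ (s + h) := by
  by_contra! hle
  have hderiv : ∀ s ∈ Ioo A B, 0 ≤ s → HasDerivWithinAt ρ 0 (Ici s) s := by
    intro s hs hs0
    refine (hasDerivWithinAt_const s _ (ρ s)).congr_of_eventuallyEq_of_mem ?_ self_mem_Ici
    filter_upwards [Ico_mem_nhdsGE (lt_add_of_pos_right s hh)] with x hx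
    have hx0 : x ∈ Ici (0 : ℝ) := hs0.trans hx.1
    exact le_antisymm ((hmono hx0 (hx0.trans hx.2.le) hx.2.le).trans (hle s hs hs0))
      (hmono hs0 hx0 hx.1)
  have hright : ∀ s ∈ Ioo A B, 0 ≤ s → ρ s = ρ B := fun s hs hs0 =>
    (constant_of_has_deriv_right_zero hcont.continuousOn
      (fun x hx => hderiv x ⟨hs.1.trans_le hx.1, hx.2⟩ (hs0.trans hx.1)) B ⟨hs.2.le, le_rfl⟩).symm
  refine hne ⟨ρ B, fun s hs => ?_⟩
  rcases le_total 0 s with hs0 | hs0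
  · exact hright s hs hs0
  · rw [← hρ.eq s]
    exact hright (-s) ⟨by linarith [hs.1], by linarith [hs.1]⟩ (neg_nonneg.2 hs0)

lemma integral_mul_translate_sub (hcont : Continuous ρ) (hρ : ρ.Even) (hW : Continuous W)
    (hW0 : ∀ t ∉ Icc A B, W t = 0) (hAB : 0 ≤ A + B) (hh : 0 ≤ h) :
    ∫ y in A..B, W y * (ρ (y + h) - ρ y)
      = ∫ y in (-h / 2)..B, (W y - W (-h - y)) * (ρ (y + h) - ρ y) := by
  have hanti : ∀ y, ρ (-h - y + h) - ρ (-h - y) = -(ρ (y + h) - ρ y) := fun y => by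
    rw [show -h - y + h = -y by ring, show -h - y = -(y + h) by ring, hρ.eq, hρ.eq, neg_sub]
  rw [← integral_mul_eq_integral_sub_reflect_mul hW (g := fun y => ρ (y + h) - ρ y) (by fun_prop)
    hanti B]
  have hint : ∀ x y, IntervalIntegrable (fun y => W y * (ρ (y + h) - ρ y)) volume x y :=
    Continuous.intervalIntegrable (by fun_prop)
  have hleft : ∫ y in (-h - B)..A, W y * (ρ (y + h) - ρ y) = 0 := by
    refine intervalIntegral.integral_zero_ae ?_
    filter_upwards [Measure.ae_ne volume A] with y hyA hy
    rw [uIoc_of_le (by linarith)] at hy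
    rw [hW0 y fun hy' => hyA (le_antisymm hy.2 hy'.1), zero_mul]
  rw [← intervalIntegral.integral_add_adjacent_intervals (hint (-h - B) A) (hint A B), hleft,
    zero_add]

lemma translate_sub_nonneg (hρ : ρ.Even) (hmono : MonotoneOn ρ (Ici 0)) (hh : 0 ≤ h) {y : ℝ}
    (hy : -h / 2 ≤ y) : 0 ≤ ρ (y + h) - ρ y :=
  sub_nonneg.2 (le_of_even_of_monotoneOn_of_abs_le hρ hmono
    (abs_le_abs (by linarith) (by linarith)))

lemma integral_mul_translate_sub_nonneg (hcont : Continuous ρ) (hρ : ρ.Even)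
    (hmono : MonotoneOn ρ (Ici 0)) (hW : Continuous W) (hW0 : ∀ t ∉ Icc A B, W t = 0)
    (hle : A ≤ B) (hAB : 0 ≤ A + B) (hh : 0 ≤ h) (hWle : ∀ y, -h / 2 ≤ y → W (-h - y) ≤ W y) :
    0 ≤ ∫ y in A..B, W y * (ρ (y + h) - ρ y) := by
  rw [integral_mul_translate_sub hcont hρ hW hW0 hAB hh]
  exact intervalIntegral.integral_nonneg (by linarith) fun y hy =>
    mul_nonneg (sub_nonneg.2 (hWle y hy.1)) (translate_sub_nonneg hρ hmono hh hy.1)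

lemma integral_mul_translate_sub_pos (hcont : Continuous ρ) (hρ : ρ.Even)
    (hmono : MonotoneOn ρ (Ici 0)) (hW : Continuous W) (hW0 : ∀ t ∉ Icc A B, W t = 0)
    (hAB : 0 ≤ A + B) (hh : 0 < h) (hWle : ∀ y, -h / 2 ≤ y → W (-h - y) ≤ W y)
    (hWlt : ∀ y ∈ Ioo A B, -h / 2 < y → W (-h - y) < W y)
    (hne : ¬ ∃ C, ∀ s ∈ Ioo A B, ρ s = C) :
    0 < ∫ y in A..B, W y * (ρ (y + h) - ρ y) := by
  obtain ⟨s, hs, hs0, hρs⟩ := exists_lt_add_of_not_constant hcont hρ hmono hAB hh hne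
  have hhs : -h / 2 < s := by linarith
  rw [integral_mul_translate_sub hcont hρ hW hW0 hAB hh.le]
  exact intervalIntegral.integral_pos (hhs.trans hs.2) (by fun_prop)
    (fun y hy => mul_nonneg (sub_nonneg.2 (hWle y hy.1.le))
      (translate_sub_nonneg hρ hmono hh.le hy.1.le))
    ⟨s, ⟨hhs.le, hs.2.le⟩, mul_pos (sub_pos.2 (hWlt s hs hhs)) (sub_pos.2 hρs)⟩

end Reflection

namespace IsDirichletGroundState

variable {p σ ρ w v w₁ v₁ w₂ v₂ : ℝ → ℝ} {A B h κ κ₁ κ₂ : ℝ}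

lemma wronskian_reflect_eq (E : IsDirichletGroundState p σ A B κ w v) (hp : p.Even)
    (hσ : σ.Even) (hAB : 0 ≤ A + B) {y : ℝ} (hy : y ∈ Icc 0 (-A)) :
    v y * w (-y) + w y * v (-y) = v A * w (-A) := by
  set Wr : ℝ → ℝ := fun y => v y * w (-y) + w y * v (-y)
  have hWr : ∀ y ∈ Icc 0 (-A), HasDerivAt Wr 0 y := by
    intro y hy
    have hpos : y ∈ Icc A B := ⟨by linarith [hy.1, hy.2], by linarith [hy.2]⟩
    have hneg : -y ∈ Icc A B := ⟨by linarith [hy.2], by linarith [hy.1, hy.2]⟩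
    have hw := (E.hasDerivAt_fun _ hneg).comp y (hasDerivAt_neg y)
    have hv := (E.hasDerivAt_flux _ hneg).comp y (hasDerivAt_neg y)
    refine (((E.hasDerivAt_flux y hpos).mul hw).add
      ((E.hasDerivAt_fun y hpos).mul hv)).congr_deriv ?_
    simp only [Function.comp_apply, hp.eq, hσ.eq]
    ring
  have hconst := constant_of_has_deriv_right_zero (HasDerivAt.continuousOn hWr) fun x hx =>
    (hWr x (Ico_subset_Icc_self hx)).hasDerivWithinAt
  change Wr y = _
  rw [hconst y hy, ← hconst (-A) ⟨hy.1.trans hy.2, le_rfl⟩]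
  simp only [Wr, neg_neg, E.left_eq_zero, mul_zero, zero_add, mul_comm]

lemma wronskian_reflect_nonneg (E : IsDirichletGroundState p σ A B κ w v) (hp : p.Even)
    (hσ : σ.Even) (hAB : 0 ≤ A + B) {y : ℝ} (hy : y ∈ Icc 0 (-A)) :
    0 ≤ v y * w (-y) + w y * v (-y) := by
  rw [E.wronskian_reflect_eq hp hσ hAB hy]
  exact mul_nonneg E.flux_left_pos.le (E.nonneg ⟨by linarith [hy.1, hy.2], by linarith⟩)

lemma strictAntiOn_flux (E : IsDirichletGroundState p σ A B κ w v)
    (hσ0 : ∀ t ∈ Icc A B, 0 < σ t) : StrictAntiOn v (Icc A B) := by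
  refine strictAntiOn_of_deriv_neg (convex_Icc A B) E.continuousOn_flux fun t ht => ?_
  rw [interior_Icc] at ht
  have ht' := Ioo_subset_Icc_self ht
  rw [(E.hasDerivAt_flux t ht').deriv]
  exact neg_neg_of_pos (mul_pos (mul_pos E.freq_pos (hσ0 t ht')) (E.pos t ht))

lemma strictMonoOn_fun (E : IsDirichletGroundState p σ A B κ w v) (hp : p.Even)
    (hσ : σ.Even) (hp0 : ∀ t ∈ Icc A B, 0 < p t) (hσ0 : ∀ t ∈ Icc A B, 0 < σ t)
    (hAB : 0 ≤ A + B) : StrictMonoOn w (Icc A 0) := by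
  rcases lt_or_ge A 0 with hA | hA
  swap
  · exact (subsingleton_Icc_of_ge hA).strictMonoOn w
  have hB : 0 < B := by linarith
  have hsub : Icc A 0 ⊆ Icc A B := Icc_subset_Icc_right hB.le
  have hv0 : 0 ≤ v 0 := by
    have h := E.wronskian_reflect_nonneg hp hσ hAB (y := 0) ⟨le_rfl, by linarith⟩
    rw [neg_zero, mul_comm (w 0), ← two_mul, ← mul_assoc] at h
    linarith [nonneg_of_mul_nonneg_left h (E.pos 0 ⟨hA, hB⟩)]
  refine strictMonoOn_of_deriv_pos (convex_Icc A 0) (E.continuousOn_fun.mono hsub) fun t ht => ?_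
  rw [interior_Icc] at ht
  have ht' := hsub (Ioo_subset_Icc_self ht)
  rw [(E.hasDerivAt_fun t ht').deriv]
  exact mul_pos (mul_pos E.freq_pos (hp0 t ht'))
    (hv0.trans_lt (E.strictAntiOn_flux hσ0 ht' ⟨hA.le, hB.le⟩ ht.2))

lemma fun_neg_le (E : IsDirichletGroundState p σ A B κ w v) (hp : p.Even) (hσ : σ.Even)
    (hp0 : ∀ t ∈ Icc A B, 0 < p t) (hAB : 0 ≤ A + B) {y : ℝ} (hy : y ∈ Icc 0 (-A)) :
    w (-y) ≤ w y := by
  rcases hy.2.eq_or_lt with rfl | hyA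
  · rw [neg_neg, E.left_eq_zero]
    exact E.nonneg ⟨by linarith [hy.1], by linarith⟩
  have hpos : ∀ s ∈ Icc 0 y, 0 < w (-s) := fun s hs =>
    E.pos _ ⟨by linarith [hs.2], by linarith [hs.1, hs.2]⟩
  have hratio : ∀ s ∈ Icc 0 y, HasDerivAt (fun s => w s / w (-s))
      (κ * p s * (v s * w (-s) + w s * v (-s)) / w (-s) ^ 2) s := by
    intro s hs
    have hs₁ : s ∈ Icc A B := ⟨by linarith [hs.1, hs.2], by linarith [hs.2]⟩
    have hs₂ : -s ∈ Icc A B := ⟨by linarith [hs.2], by linarith [hs.1, hs.2]⟩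
    refine ((E.hasDerivAt_fun s hs₁).div ((E.hasDerivAt_fun _ hs₂).comp s (hasDerivAt_neg s))
      (hpos s hs).ne').congr_deriv ?_
    simp only [Function.comp_apply, hp.eq]
    ring
  have hmono : MonotoneOn (fun s => w s / w (-s)) (Icc 0 y) := by
    refine monotoneOn_of_deriv_nonneg (convex_Icc 0 y) (HasDerivAt.continuousOn hratio)
      (fun s hs => (hratio s (interior_subset hs)).differentiableAt.differentiableWithinAt)
      fun s hs => ?_
    have hs := interior_subset hs
    have hsB : s ∈ Icc A B := ⟨by linarith [hs.1, hs.2], by linarith [hs.2]⟩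
    rw [(hratio s hs).deriv]
    exact div_nonneg (mul_nonneg (mul_nonneg E.freq_pos.le (hp0 s hsB).le)
      (E.wronskian_reflect_nonneg hp hσ hAB ⟨hs.1, hs.2.trans hy.2⟩)) (sq_nonneg _)
  have h := hmono ⟨le_rfl, hy.1⟩ ⟨hy.1, le_rfl⟩ hy.1
  have hy0 := hpos 0 ⟨le_rfl, hy.1⟩
  rw [neg_zero] at hy0
  simp only [neg_zero, div_self hy0.ne'] at h
  exact (one_le_div (hpos y ⟨hy.1, le_rfl⟩)).1 h

lemma fun_lt_of_add_neg (E : IsDirichletGroundState p σ A B κ w v) (hp : p.Even) (hσ : σ.Even)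
    (hp0 : ∀ t ∈ Icc A B, 0 < p t) (hσ0 : ∀ t ∈ Icc A B, 0 < σ t) (hAB : 0 ≤ A + B) {y z : ℝ}
    (hAz : A ≤ z) (hzy : z < y) (hyz : z + y < 0) : w z < w y := by
  have hmono := E.strictMonoOn_fun hp hσ hp0 hσ0 hAB
  rcases le_total y 0 with hy | hy
  · exact hmono ⟨hAz, hzy.le.trans hy⟩ ⟨hAz.trans hzy.le, hy⟩ hzy
  · calc w z < w (-y) := hmono ⟨hAz, by linarith⟩ ⟨by linarith, by linarith⟩ (by linarith)
      _ ≤ w y := E.fun_neg_le hp hσ hp0 hAB ⟨hy, by linarith⟩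

lemma exists_sq_extension_reflect_le (E : IsDirichletGroundState p σ A B κ w v) (hp : p.Even)
    (hσ : σ.Even) (hp0 : ∀ t ∈ Icc A B, 0 < p t) (hσ0 : ∀ t ∈ Icc A B, 0 < σ t)
    (hAB : 0 ≤ A + B) (hh : 0 < h) :
    ∃ W : ℝ → ℝ, Continuous W ∧ EqOn W (fun t => w t ^ 2) (Icc A B) ∧ (∀ t ∉ Icc A B, W t = 0) ∧
      (∀ y, -h / 2 ≤ y → W (-h - y) ≤ W y) ∧
      ∀ y ∈ Ioo A B, -h / 2 < y → W (-h - y) < W y := by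
  obtain ⟨W, hW, hWw, hW0⟩ := exists_continuous_eqOn_Icc_of_eq_zero E.lt.le
    (E.continuousOn_fun.pow 2) (by simp [E.left_eq_zero]) (by simp [E.right_eq_zero])
  have hlt : ∀ y ∈ Ioo A B, -h / 2 < y → W (-h - y) < W y := by
    intro y hy hhy
    rw [hWw (Ioo_subset_Icc_self hy)]
    by_cases hz : -h - y ∈ Icc A B
    · rw [hWw hz]
      exact pow_lt_pow_left₀ (E.fun_lt_of_add_neg hp hσ hp0 hσ0 hAB hz.1 (by linarith)
        (by linarith)) (E.nonneg hz) two_ne_zero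
    · rw [hW0 _ hz]
      exact pow_pos (E.pos y hy) 2
  refine ⟨W, hW, hWw, hW0, fun y hhy => ?_, hlt⟩
  rcases hhy.eq_or_lt with rfl | hhy
  · rw [show -h - -h / 2 = -h / 2 by ring]
  by_cases hy : y ∈ Ioo A B
  · exact (hlt y hy hhy).le
  have hzA : -h - y < A := by
    by_contra! hAz
    exact hy ⟨by linarith, by linarith⟩
  rw [hW0 _ fun hz => hz.1.not_gt hzA]
  by_cases hy : y ∈ Icc A B
  · rw [hWw hy]
    exact sq_nonneg _
  · exact (hW0 y hy).ge

lemma integral_translate_mul_sq_sub (E : IsDirichletGroundState p ρ A B κ w v)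
    (hcont : Continuous ρ) {W : ℝ → ℝ} (hWw : EqOn W (fun t => w t ^ 2) (Icc A B)) :
    (∫ t in A..B, ρ (t + h) * w t ^ 2) - ∫ t in A..B, ρ t * w t ^ 2
      = ∫ t in A..B, W t * (ρ (t + h) - ρ t) := by
  have hint : ∀ f : ℝ → ℝ, Continuous f →
      IntervalIntegrable (fun t => f t * w t ^ 2) volume A B := fun f hf =>
    (hf.continuousOn.mul (E.continuousOn_fun.pow 2)).intervalIntegrable_of_Icc E.lt.le
  rw [← intervalIntegral.integral_sub (hint (fun t => ρ (t + h)) (by fun_prop)) (hint ρ hcont)]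
  refine intervalIntegral.integral_congr fun t ht => ?_
  rw [uIcc_of_le E.lt.le] at ht
  simp only [hWw ht]
  ring

lemma integral_mul_sq_le_translate (E : IsDirichletGroundState p ρ A B κ w v) (hp : p.Even)
    (hp0 : ∀ t ∈ Icc A B, 0 < p t) (hcont : Continuous ρ) (hρ : ρ.Even)
    (hmono : MonotoneOn ρ (Ici 0)) (hρ0 : ∀ t ∈ Icc A B, 0 < ρ t) (hAB : 0 ≤ A + B)
    (hh : 0 ≤ h) :
    ∫ t in A..B, ρ t * w t ^ 2 ≤ ∫ t in A..B, ρ (t + h) * w t ^ 2 := by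
  rcases hh.eq_or_lt with rfl | hh
  · simp only [add_zero, le_rfl]
  obtain ⟨W, hW, hWw, hW0, hWle, -⟩ := E.exists_sq_extension_reflect_le hp hρ hp0 hρ0 hAB hh
  rw [← sub_nonneg, E.integral_translate_mul_sq_sub hcont hWw]
  exact integral_mul_translate_sub_nonneg hcont hρ hmono hW hW0 E.lt.le hAB hh.le hWle

lemma integral_mul_sq_lt_translate (E : IsDirichletGroundState p ρ A B κ w v) (hp : p.Even)
    (hp0 : ∀ t ∈ Icc A B, 0 < p t) (hcont : Continuous ρ) (hρ : ρ.Even)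
    (hmono : MonotoneOn ρ (Ici 0)) (hρ0 : ∀ t ∈ Icc A B, 0 < ρ t) (hAB : 0 ≤ A + B)
    (hh : 0 < h) (hne : ¬ ∃ C, ∀ t ∈ Ioo A B, ρ t = C) :
    ∫ t in A..B, ρ t * w t ^ 2 < ∫ t in A..B, ρ (t + h) * w t ^ 2 := by
  obtain ⟨W, hW, hWw, hW0, hWle, hWlt⟩ := E.exists_sq_extension_reflect_le hp hρ hp0 hρ0 hAB hh
  rw [← sub_pos, E.integral_translate_mul_sq_sub hcont hWw]
  exact integral_mul_translate_sub_pos hcont hρ hmono hW hW0 hAB hh hWle hWlt hne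

lemma freq_translate_le (E₁ : IsDirichletGroundState p ρ A B κ₁ w₁ v₁)
    (E₂ : IsDirichletGroundState p (fun t => ρ (t + h)) A B κ₂ w₂ v₂)
    (hpcont : ContinuousOn p (Icc A B)) (hp : p.Even) (hp0 : ∀ t ∈ Icc A B, 0 < p t)
    (hcont : Continuous ρ) (hρ : ρ.Even)
    (hmono : MonotoneOn ρ (Ici 0)) (hρ0 : ∀ t ∈ Icc A B, 0 < ρ t) (hAB : 0 ≤ A + B)
    (hh : 0 ≤ h) : κ₂ ≤ κ₁ := by
  have hmass := E₁.integral_mul_sq_le_translate hp hp0 hcont hρ hmono hρ0 hAB hh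
  have hpos := E₁.integral_mul_sq_pos hcont.continuousOn hρ0
  have hcomp := E₁.sq_mul_integral_le_sq_mul_integral E₂ hpcont hp0 hcont.continuousOn
    (by fun_prop)
  by_contra! hlt
  have hsq := pow_lt_pow_left₀ hlt E₁.freq_pos.le two_ne_zero
  exact hcomp.not_gt (mul_lt_mul_of_lt_of_le_of_pos_of_nonneg hsq hmass hpos (sq_nonneg κ₂))

lemma freq_translate_lt (E₁ : IsDirichletGroundState p ρ A B κ₁ w₁ v₁)
    (E₂ : IsDirichletGroundState p (fun t => ρ (t + h)) A B κ₂ w₂ v₂)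
    (hpcont : ContinuousOn p (Icc A B)) (hp : p.Even) (hp0 : ∀ t ∈ Icc A B, 0 < p t)
    (hcont : Continuous ρ) (hρ : ρ.Even)
    (hmono : MonotoneOn ρ (Ici 0)) (hρ0 : ∀ t ∈ Icc A B, 0 < ρ t) (hAB : 0 ≤ A + B)
    (hh : 0 < h) (hne : ¬ ∃ C, ∀ t ∈ Ioo A B, ρ t = C) : κ₂ < κ₁ := by
  have hmass := E₁.integral_mul_sq_lt_translate hp hp0 hcont hρ hmono hρ0 hAB hh hne
  have hpos := E₁.integral_mul_sq_pos hcont.continuousOn hρ0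
  have hcomp := E₁.sq_mul_integral_le_sq_mul_integral E₂ hpcont hp0 hcont.continuousOn
    (by fun_prop)
  by_contra! hle
  have hsq := pow_le_pow_left₀ E₁.freq_pos.le hle 2
  exact hcomp.not_gt (mul_lt_mul' hsq hmass hpos.le (pow_pos E₂.freq_pos 2))

end IsDirichletGroundState

lemma integral_add_mul_inv_sq_mul {q f φ : ℝ → ℝ} {a b : ℝ} (hab : a ≤ b)
    (hq : ContinuousOn q (Icc a b)) (hq0 : ∀ x ∈ Icc a b, q x ≠ 0)
    (hf : ContinuousOn f (Icc a b)) (hφ : ContinuousOn φ (Icc a b)) (c : ℝ) :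
    ∫ x in a..b, (f x + c * (q x)⁻¹ * φ x) ^ 2 * q x
      = (∫ x in a..b, f x ^ 2 * q x) + 2 * c * (∫ x in a..b, f x * φ x)
        + c ^ 2 * ∫ x in a..b, (q x)⁻¹ * φ x ^ 2 := by
  have hfq : IntervalIntegrable (fun x => f x ^ 2 * q x) volume a b :=
    ((hf.pow 2).mul hq).intervalIntegrable_of_Icc hab
  have hfφ : IntervalIntegrable (fun x => 2 * c * (f x * φ x)) volume a b :=
    ((hf.mul hφ).const_mul _).intervalIntegrable_of_Icc hab
  have hφq : IntervalIntegrable (fun x => c ^ 2 * ((q x)⁻¹ * φ x ^ 2)) volume a b :=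
    (((hq.inv₀ hq0).mul (hφ.pow 2)).const_mul _).intervalIntegrable_of_Icc hab
  rw [← intervalIntegral.integral_const_mul, ← intervalIntegral.integral_const_mul,
    ← intervalIntegral.integral_add hfq hfφ, ← intervalIntegral.integral_add (hfq.add hfφ) hφq]
  refine intervalIntegral.integral_congr fun x hx => ?_
  have hqx := hq0 x (uIcc_of_le hab ▸ hx)
  field_simp
  ring

namespace IsDirichletGroundState

variable {q σ w v u u' : ℝ → ℝ} {a b κ : ℝ}

lemma integral_mul_flux_eq_zero (E : IsDirichletGroundState q σ a b κ w v)
    (hq : ContinuousOn q (Icc a b)) : ∫ x in a..b, q x * v x = 0 := by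
  have hqv : ContinuousOn (fun x => κ * q x * v x) (Icc a b) :=
    (hq.const_mul κ).mul E.continuousOn_flux
  have h := intervalIntegral.integral_eq_sub_of_hasDerivAt
    (fun x hx => E.hasDerivAt_fun x (uIcc_of_le E.lt.le ▸ hx))
    (hqv.intervalIntegrable_of_Icc E.lt.le)
  simp only [mul_assoc, intervalIntegral.integral_const_mul, E.left_eq_zero, E.right_eq_zero,
    sub_self] at h
  exact (mul_eq_zero.1 h).resolve_left E.freq_pos.ne'

lemma sq_mul_integral_sq_mul_le (E : IsDirichletGroundState q (fun x => (q x)⁻¹) a b κ w v)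
    (hq : ContinuousOn q (Icc a b)) (hq0 : ∀ x ∈ Icc a b, 0 < q x)
    (hu : ∀ x ∈ Icc a b, HasDerivAt u (u' x) x) (hu' : ContinuousOn u' (Icc a b))
    (hmean : ∫ x in a..b, u x * q x = 0) :
    κ ^ 2 * (∫ x in a..b, u x ^ 2 * q x) ≤ ∫ x in a..b, u' x ^ 2 * q x := by
  have hab := E.lt.le
  have hucont : ContinuousOn u (Icc a b) := HasDerivAt.continuousOn hu
  have huq : ContinuousOn (fun x => u x * q x) (Icc a b) := hucont.mul hq
  have hq_ne : ∀ x ∈ Icc a b, q x ≠ 0 := fun x hx => (hq0 x hx).ne'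
  obtain ⟨φ, -, hφa, hφ⟩ := exists_contDiff_primitive hab huq 0
  have hφ' : ∀ x ∈ uIcc a b, HasDerivAt φ (u x * q x) x := by rwa [uIcc_of_le hab]
  have hφb : φ b = 0 := by
    rw [intervalIntegral.integral_eq_sub_of_hasDerivAt hφ' (huq.intervalIntegrable_of_Icc hab),
      hφa, sub_zero] at hmean
    exact hmean
  have hpicone : κ ^ 2 * (∫ x in a..b, (q x)⁻¹ * φ x ^ 2) ≤ ∫ x in a..b, u x ^ 2 * q x := by
    refine (E.sq_mul_integral_le hq (hq.inv₀ hq_ne) hq0 hφ huq hφa hφb).trans_eq ?_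
    refine intervalIntegral.integral_congr fun x hx => ?_
    have hqx := hq_ne x (uIcc_of_le hab ▸ hx)
    field_simp
  have hparts : ∫ x in a..b, u x ^ 2 * q x = -∫ x in a..b, u' x * φ x := by
    have h := intervalIntegral.integral_mul_deriv_eq_deriv_mul (by rwa [uIcc_of_le hab]) hφ'
      (hu'.intervalIntegrable_of_Icc hab) (huq.intervalIntegrable_of_Icc hab)
    rw [hφa, hφb, mul_zero, mul_zero, sub_self, zero_sub] at h
    simp only [← h, sq, mul_assoc]
  have hsquare : 0 ≤ ∫ x in a..b, (u' x + κ ^ 2 * (q x)⁻¹ * φ x) ^ 2 * q x :=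
    intervalIntegral.integral_nonneg hab fun x hx => mul_nonneg (sq_nonneg _) (hq0 x hx).le
  rw [integral_add_mul_inv_sq_mul hab hq hq_ne hu' (HasDerivAt.continuousOn hφ)] at hsquare
  linear_combination hsquare + κ ^ 2 * hpicone + 2 * κ ^ 2 * hparts

lemma neumannMu1_eq_sq (E : IsDirichletGroundState q (fun x => (q x)⁻¹) a b κ w v)
    (hq : ContinuousOn q (Icc a b)) (hq0 : ∀ x ∈ Icc a b, 0 < q x) :
    neumannMu1 q a b = κ ^ 2 := by
  have hab := E.lt.le
  have hqinv : ContinuousOn (fun x => (q x)⁻¹) (Icc a b) := hq.inv₀ fun x hx => (hq0 x hx).ne'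
  have hderiv : ContinuousOn (fun x => -(κ * (q x)⁻¹ * w x)) (Icc a b) :=
    ((hqinv.const_mul κ).mul E.continuousOn_fun).neg
  obtain ⟨u, hu, huv, hu'⟩ := exists_contDiff_eqOn_Icc hab hderiv E.hasDerivAt_flux
  have hpos := E.integral_mul_sq_pos hqinv fun x hx => inv_pos.2 (hq0 x hx)
  have hnorm : ∫ x in a..b, u x ^ 2 * q x = ∫ x in a..b, (q x)⁻¹ * w x ^ 2 := by
    rw [← E.integral_mul_flux_sq hq hqinv]
    refine intervalIntegral.integral_congr fun x hx => ?_
    simp only [huv (uIcc_of_le hab ▸ hx), mul_comm]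
  have hdirichlet : ∫ x in a..b, deriv u x ^ 2 * q x
      = κ ^ 2 * ∫ x in a..b, (q x)⁻¹ * w x ^ 2 := by
    rw [← intervalIntegral.integral_const_mul]
    refine intervalIntegral.integral_congr fun x hx => ?_
    rw [uIcc_of_le hab] at hx
    have hqx := (hq0 x hx).ne'
    simp only [hu' hx]
    field_simp
  have hmean : ∫ x in a..b, u x * q x = 0 := by
    rw [← E.integral_mul_flux_eq_zero hq]
    refine intervalIntegral.integral_congr fun x hx => ?_
    simp only [huv (uIcc_of_le hab ▸ hx), mul_comm]
  refine IsLeast.csInf_eq ⟨⟨u, hu, hnorm ▸ hpos, hmean, ?_⟩, ?_⟩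
  · rw [hdirichlet, hnorm, mul_div_cancel_right₀ _ hpos.ne']
  · rintro _ ⟨f, hf, hf_pos, hf_mean, rfl⟩
    exact (le_div_iff₀ hf_pos).2 (E.sq_mul_integral_sq_mul_le hq hq0
      (fun x _ => (hf.differentiable one_ne_zero x).hasDerivAt)
      (hf.continuous_deriv le_rfl).continuousOn hf_mean)

end IsDirichletGroundState

/-- `F` is a mass coordinate of the weight `q` on `s`, i.e. a primitive of `q`, normalised to be
odd, and `ρ` is the density `q⁻²` read in that coordinate: `(u' q)' = -μ u q` becomes
`w'' = -μ ρ w` for the flux `w = u' q`. Evenness and monotonicity of `q` are recorded through `ρ`,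
which is defined on the whole line. -/
structure IsMassCoordinate (q : ℝ → ℝ) (s : Set ℝ) (F ρ : ℝ → ℝ) : Prop where
  hasDerivAt : ∀ x ∈ s, HasDerivAt F (q x) x
  odd : F.Odd
  density_comp : ∀ x ∈ s, ρ (F x) = (q x ^ 2)⁻¹
  continuous_density : Continuous ρ
  density_pos : ∀ y, 0 < ρ y
  density_even : ρ.Even
  monotoneOn_density : MonotoneOn ρ (Ici 0)

section MassCoordinate

variable {q F : ℝ → ℝ}

lemma odd_primitive_of_even (hq : q.Even) : Function.Odd fun x => ∫ t in (0 : ℝ)..x, q t := by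
  intro x
  have h := intervalIntegral.integral_comp_neg q (a := 0) (b := x)
  rw [neg_zero] at h
  simp only [hq.eq] at h
  exact (intervalIntegral.integral_symm _ _).trans (congrArg Neg.neg h.symm)

lemma surjective_of_odd_of_le_deriv {m : ℝ} (hm : 0 < m) (hodd : F.Odd)
    (hF : ∀ x, HasDerivAt F (q x) x) (hq : ∀ x, m ≤ q x) : Function.Surjective F := by
  have hcont : Continuous F := continuous_iff_continuousAt.2 fun x => (hF x).continuousAt
  have hle : ∀ x, 0 ≤ x → m * x ≤ F x := by
    intro x hx
    have h := mul_sub_le_image_sub_of_le_deriv (fun x => (hF x).differentiableAt)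
      (fun x => (hF x).deriv ▸ hq x) hx
    rwa [sub_zero, hodd.map_zero, sub_zero] at h
  have htop : Filter.Tendsto F Filter.atTop Filter.atTop :=
    Filter.tendsto_atTop_mono' _ (Filter.eventually_ge_atTop 0 |>.mono hle)
      (Filter.tendsto_id.const_mul_atTop hm)
  have hbot : Filter.Tendsto F Filter.atBot Filter.atBot := by
    have h := Filter.tendsto_neg_atTop_atBot.comp (htop.comp Filter.tendsto_neg_atBot_atTop)
    refine h.congr fun x => ?_
    simp only [Function.comp_apply, hodd.eq, neg_neg]
  exact hcont.surjective htop hbot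

lemma exists_isMassCoordinate_univ (hcont : Continuous q) (heven : q.Even)
    (hanti : AntitoneOn q (Ici 0)) {m : ℝ} (hm : 0 < m) (hq : ∀ x, m ≤ q x) :
    ∃ F ρ, IsMassCoordinate q univ F ρ := by
  set F : ℝ → ℝ := fun x => ∫ t in (0 : ℝ)..x, q t
  have hF : ∀ x, HasDerivAt F (q x) x := fun x =>
    (hcont.integral_hasStrictDerivAt 0 x).hasDerivAt
  have hq0 : ∀ x, 0 < q x := fun x => hm.trans_le (hq x)
  have hodd : F.Odd := odd_primitive_of_even heven
  have hmono : StrictMono F := strictMono_of_deriv_pos fun x => (hF x).deriv ▸ hq0 x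
  let e := hmono.orderIsoOfSurjective F (surjective_of_odd_of_le_deriv hm hodd hF hq)
  have he_neg : ∀ y, e.symm (-y) = -e.symm y := fun y => by
    rw [e.symm_apply_eq]
    exact ((hodd _).trans (congrArg _ (e.apply_symm_apply y))).symm
  have he_nonneg : ∀ y, 0 ≤ y → 0 ≤ e.symm y := fun y hy => by
    rw [e.le_symm_apply]
    exact hodd.map_zero.trans_le hy
  refine ⟨F, fun y => (q (e.symm y) ^ 2)⁻¹, fun x _ => hF x, hodd, fun x _ => ?_, ?_,
    fun y => inv_pos.2 (pow_pos (hq0 _) 2), fun y => ?_, fun y hy z _ hyz => ?_⟩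
  · exact congrArg (fun x => (q x ^ 2)⁻¹) (e.symm_apply_apply x)
  · exact ((hcont.comp e.symm.continuous).pow 2).inv₀ fun y => (pow_pos (hq0 _) 2).ne'
  · simp only [he_neg, heven.eq]
  · have hle := hanti (he_nonneg y hy) (he_nonneg z (hy.trans hyz)) (e.symm.monotone hyz)
    exact inv_anti₀ (pow_pos (hq0 _) 2) (pow_le_pow_left₀ (hq0 _).le hle 2)

lemma exists_isMassCoordinate_Icc (hcont : Continuous q) (hq0 : ∀ x, 0 < q x) (heven : q.Even)
    (hanti : AntitoneOn q (Ici 0)) {X : ℝ} (hX : 0 ≤ X) :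
    ∃ F ρ, IsMassCoordinate q (Icc (-X) X) F ρ := by
  set p : ℝ → ℝ := fun x => q (min |x| X)
  have hmem : ∀ x : ℝ, min |x| X ∈ Ici (0 : ℝ) := fun x => le_min (abs_nonneg x) hX
  obtain ⟨F, ρ, h⟩ := exists_isMassCoordinate_univ (q := p) (by fun_prop)
    (fun x => by simp only [p, abs_neg])
    (fun x hx y _ hxy => hanti (hmem x) (hmem y)
      (min_le_min_right X (abs_le_abs_of_nonneg hx hxy)))
    (hq0 X) (fun x => hanti (hmem x) hX (min_le_right _ _))
  have hpq : ∀ x ∈ Icc (-X) X, p x = q x := fun x hx => by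
    simp only [p, min_eq_left (abs_le.2 hx), apply_abs_of_even_s2 heven]
  exact ⟨F, ρ, fun x hx => hpq x hx ▸ h.hasDerivAt x (mem_univ x), h.odd,
    fun x hx => hpq x hx ▸ h.density_comp x (mem_univ x), h.continuous_density, h.density_pos,
    h.density_even, h.monotoneOn_density⟩

end MassCoordinate

namespace IsMassCoordinate

variable {q F ρ : ℝ → ℝ} {s : Set ℝ} {a b a₁ b₁ a₂ b₂ : ℝ}

lemma strictMonoOn (hF : IsMassCoordinate q s F ρ) (hq0 : ∀ x ∈ s, 0 < q x) (hs : Convex ℝ s) :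
    StrictMonoOn F s := by
  refine strictMonoOn_of_deriv_pos hs (HasDerivAt.continuousOn hF.hasDerivAt) fun x hx => ?_
  have hx := interior_subset hx
  exact (hF.hasDerivAt x hx).deriv ▸ hq0 x hx

lemma integral_eq_sub (hF : IsMassCoordinate q s F ρ) (hq : ContinuousOn q s)
    (hab : a ≤ b) (hs : Icc a b ⊆ s) : ∫ x in a..b, q x = F b - F a :=
  intervalIntegral.integral_eq_sub_of_hasDerivAt
    (fun x hx => hF.hasDerivAt x (hs (uIcc_of_le hab ▸ hx)))
    ((hq.mono hs).intervalIntegrable_of_Icc hab)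

lemma apply_add_apply_nonneg (hF : IsMassCoordinate q s F ρ) (hmono : MonotoneOn F s) (ha : -a ∈ s)
    (hb : b ∈ s) (hab : 0 ≤ a + b) : 0 ≤ F a + F b := by
  have h := hmono ha hb (by linarith)
  rw [hF.odd.eq] at h
  linarith

lemma exists_groundState_neumannMu1_eq_sq (hF : IsMassCoordinate q s F ρ) (hq : ContinuousOn q s)
    (hq0 : ∀ x ∈ s, 0 < q x) (hmono : StrictMonoOn F s) (hab : a < b) (hs : Icc a b ⊆ s) (h : ℝ) :
    ∃ κ w v, IsDirichletGroundState (fun _ => 1) (fun y => ρ (y + h)) (F a - h) (F b - h) κ w v ∧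
      neumannMu1 q a b = κ ^ 2 := by
  have hFab : F a < F b := hmono (hs ⟨le_rfl, hab.le⟩) (hs ⟨hab.le, le_rfl⟩) hab
  obtain ⟨κ, w, v, E⟩ := exists_isDirichletGroundState (p := fun _ => 1)
    (σ := fun y => ρ (y + h)) continuous_const (hF.continuous_density.comp (by fun_prop))
    (fun _ => one_pos) (fun y => hF.density_pos _) (sub_lt_sub_right hFab h)
  have hpull := E.comp (G := fun x => F x - h) (p' := q) (σ' := fun x => (q x)⁻¹) hab
    (fun x hx => hq0 x (hs hx)) (fun x hx => (hF.hasDerivAt x (hs hx)).sub_const h)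
    (fun x _ => (one_mul _).symm) fun x hx => by
      have hqx := (hq0 x (hs hx)).ne'
      simp only [sub_add_cancel, hF.density_comp x (hs hx)]
      field_simp
  exact ⟨κ, w, v, E, hpull.neumannMu1_eq_sq (hq.mono hs) fun x hx => hq0 x (hs hx)⟩

lemma exists_eq_of_density_eq (hF : IsMassCoordinate q s F ρ) (hq0 : ∀ x ∈ s, 0 < q x)
    (hmono : StrictMonoOn F s) (hs : Icc a b ⊆ s) {C : ℝ} (hρ : ∀ y ∈ Ioo (F a) (F b), ρ y = C) :
    ∃ C, ∀ x ∈ Ioo a b, q x = C := by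
  refine ⟨√(C⁻¹), fun x hx => ?_⟩
  have hab := (hx.1.trans hx.2).le
  have hxs := hs (Ioo_subset_Icc_self hx)
  rw [← hρ (F x) ⟨hmono (hs ⟨le_rfl, hab⟩) hxs hx.1, hmono hxs (hs ⟨hab, le_rfl⟩) hx.2⟩,
    hF.density_comp x hxs, inv_inv, Real.sqrt_sq (hq0 x hxs).le]

lemma exists_groundStates_neumannMu1_eq_sq (hF : IsMassCoordinate q s F ρ)
    (hq : ContinuousOn q s) (hq0 : ∀ x ∈ s, 0 < q x) (hmono : StrictMonoOn F s)
    (hab₁ : a₁ < b₁) (hab₂ : a₂ < b₂) (hs₁ : Icc a₁ b₁ ⊆ s) (hs₂ : Icc a₂ b₂ ⊆ s)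
    (hmass : F b₁ - F a₁ = F b₂ - F a₂) :
    ∃ κ₁ w₁ v₁ κ₂ w₂ v₂,
      IsDirichletGroundState (fun _ => 1) ρ (F a₁) (F b₁) κ₁ w₁ v₁ ∧
      IsDirichletGroundState (fun _ => 1) (fun y => ρ (y + (F a₂ - F a₁))) (F a₁) (F b₁)
        κ₂ w₂ v₂ ∧
      neumannMu1 q a₁ b₁ = κ₁ ^ 2 ∧ neumannMu1 q a₂ b₂ = κ₂ ^ 2 := by
  obtain ⟨κ₁, w₁, v₁, E₁, hμ₁⟩ :=
    hF.exists_groundState_neumannMu1_eq_sq hq hq0 hmono hab₁ hs₁ 0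
  obtain ⟨κ₂, w₂, v₂, E₂, hμ₂⟩ :=
    hF.exists_groundState_neumannMu1_eq_sq hq hq0 hmono hab₂ hs₂ (F a₂ - F a₁)
  simp only [add_zero, sub_zero] at E₁
  rw [sub_sub_cancel, show F b₂ - (F a₂ - F a₁) = F b₁ by linarith] at E₂
  exact ⟨κ₁, w₁, v₁, κ₂, w₂, v₂, E₁, E₂, hμ₁, hμ₂⟩

lemma neumannMu1_le (hF : IsMassCoordinate q s F ρ) (hq : ContinuousOn q s)
    (hq0 : ∀ x ∈ s, 0 < q x) (hmono : StrictMonoOn F s)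
    (hab₁ : a₁ < b₁) (hab₂ : a₂ < b₂) (hs₁ : Icc a₁ b₁ ⊆ s) (hs₂ : Icc a₂ b₂ ⊆ s)
    (hmass : F b₁ - F a₁ = F b₂ - F a₂) (hcenter : 0 ≤ F a₁ + F b₁) (ha : a₁ ≤ a₂) :
    neumannMu1 q a₂ b₂ ≤ neumannMu1 q a₁ b₁ := by
  obtain ⟨κ₁, w₁, v₁, κ₂, w₂, v₂, E₁, E₂, hμ₁, hμ₂⟩ :=
    hF.exists_groundStates_neumannMu1_eq_sq hq hq0 hmono hab₁ hab₂ hs₁ hs₂ hmass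
  have hshift : F a₁ ≤ F a₂ :=
    hmono.monotoneOn (hs₁ ⟨le_rfl, hab₁.le⟩) (hs₂ ⟨le_rfl, hab₂.le⟩) ha
  rw [hμ₁, hμ₂]
  exact pow_le_pow_left₀ E₂.freq_pos.le (E₁.freq_translate_le E₂ continuousOn_const (.const 1)
    (fun _ _ => one_pos) hF.continuous_density hF.density_even hF.monotoneOn_density
    (fun y _ => hF.density_pos y) hcenter (sub_nonneg.2 hshift)) 2

lemma neumannMu1_lt (hF : IsMassCoordinate q s F ρ) (hq : ContinuousOn q s)
    (hq0 : ∀ x ∈ s, 0 < q x) (hmono : StrictMonoOn F s)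
    (hab₁ : a₁ < b₁) (hab₂ : a₂ < b₂) (hs₁ : Icc a₁ b₁ ⊆ s) (hs₂ : Icc a₂ b₂ ⊆ s)
    (hmass : F b₁ - F a₁ = F b₂ - F a₂) (hcenter : 0 ≤ F a₁ + F b₁) (ha : a₁ < a₂)
    (hne : ¬ ∃ C, ∀ x ∈ Ioo a₁ b₁, q x = C) :
    neumannMu1 q a₂ b₂ < neumannMu1 q a₁ b₁ := by
  obtain ⟨κ₁, w₁, v₁, κ₂, w₂, v₂, E₁, E₂, hμ₁, hμ₂⟩ :=
    hF.exists_groundStates_neumannMu1_eq_sq hq hq0 hmono hab₁ hab₂ hs₁ hs₂ hmass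
  have hshift : F a₁ < F a₂ := hmono (hs₁ ⟨le_rfl, hab₁.le⟩) (hs₂ ⟨le_rfl, hab₂.le⟩) ha
  rw [hμ₁, hμ₂]
  exact pow_lt_pow_left₀ (E₁.freq_translate_lt E₂ continuousOn_const (.const 1)
    (fun _ _ => one_pos) hF.continuous_density hF.density_even hF.monotoneOn_density
    (fun y _ => hF.density_pos y) hcenter (sub_pos.2 hshift)
    fun ⟨_, hρ⟩ => hne (hF.exists_eq_of_density_eq hq0 hmono hs₁ hρ)) E₂.freq_pos.le two_ne_zero

end IsMassCoordinate

section Sliding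

variable {q : ℝ → ℝ} {a₁ b₁ a₂ b₂ : ℝ}

lemma exists_isMassCoordinate_of_integral_eq (hcont : Continuous q) (hq0 : ∀ x, 0 < q x)
    (heven : q.Even) (hanti : AntitoneOn q (Ici 0)) (hab₁ : a₁ < b₁) (hab₂ : a₂ < b₂)
    (ha : a₁ ≤ a₂) (hcenter : 0 ≤ a₁ + b₁) (hmass : ∫ x in a₁..b₁, q x = ∫ x in a₂..b₂, q x) :
    ∃ s F ρ, IsMassCoordinate q s F ρ ∧ StrictMonoOn F s ∧ Icc a₁ b₁ ⊆ s ∧ Icc a₂ b₂ ⊆ s ∧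
      F b₁ - F a₁ = F b₂ - F a₂ ∧ 0 ≤ F a₁ + F b₁ := by
  have hb₁ := le_max_left b₁ b₂
  set s := Icc (-max b₁ b₂) (max b₁ b₂)
  have hs₁ : Icc a₁ b₁ ⊆ s := Icc_subset_Icc (by linarith) hb₁
  have hs₂ : Icc a₂ b₂ ⊆ s := Icc_subset_Icc (by linarith) (le_max_right _ _)
  obtain ⟨F, ρ, hF⟩ := exists_isMassCoordinate_Icc hcont hq0 heven hanti
    (X := max b₁ b₂) (by linarith)
  have hmono := hF.strictMonoOn (fun x _ => hq0 x) (convex_Icc _ _)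
  refine ⟨s, F, ρ, hF, hmono, hs₁, hs₂, ?_, ?_⟩
  · rw [← hF.integral_eq_sub hcont.continuousOn hab₁.le hs₁,
      ← hF.integral_eq_sub hcont.continuousOn hab₂.le hs₂, hmass]
  · exact hF.apply_add_apply_nonneg hmono.monotoneOn ⟨by linarith, by linarith⟩
      (hs₁ ⟨hab₁.le, le_rfl⟩) hcenter

theorem neumannMu1_le_of_integral_eq_s2 (hcont : Continuous q) (hq0 : ∀ x, 0 < q x)
    (heven : q.Even) (hanti : AntitoneOn q (Ici 0)) (hab₁ : a₁ < b₁) (hab₂ : a₂ < b₂)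
    (ha : a₁ ≤ a₂) (hcenter : 0 ≤ a₁ + b₁) (hmass : ∫ x in a₁..b₁, q x = ∫ x in a₂..b₂, q x) :
    neumannMu1 q a₂ b₂ ≤ neumannMu1 q a₁ b₁ := by
  obtain ⟨s, F, ρ, hF, hmono, hs₁, hs₂, hFmass, hFcenter⟩ :=
    exists_isMassCoordinate_of_integral_eq hcont hq0 heven hanti hab₁ hab₂ ha hcenter hmass
  exact hF.neumannMu1_le hcont.continuousOn (fun x _ => hq0 x) hmono hab₁ hab₂ hs₁ hs₂ hFmass
    hFcenter ha

theorem neumannMu1_lt_of_integral_eq_s2 (hcont : Continuous q) (hq0 : ∀ x, 0 < q x)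
    (heven : q.Even) (hanti : AntitoneOn q (Ici 0)) (hab₁ : a₁ < b₁) (hab₂ : a₂ < b₂)
    (ha : a₁ < a₂) (hcenter : 0 ≤ a₁ + b₁) (hmass : ∫ x in a₁..b₁, q x = ∫ x in a₂..b₂, q x)
    (hne : ¬ ∃ C, ∀ x ∈ Ioo a₁ b₁, q x = C) :
    neumannMu1 q a₂ b₂ < neumannMu1 q a₁ b₁ := by
  obtain ⟨s, F, ρ, hF, hmono, hs₁, hs₂, hFmass, hFcenter⟩ :=
    exists_isMassCoordinate_of_integral_eq hcont hq0 heven hanti hab₁ hab₂ ha.le hcenter hmass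
  exact hF.neumannMu1_lt hcont.continuousOn (fun x _ => hq0 x) hmono hab₁ hab₂ hs₁ hs₂ hFmass
    hFcenter ha hne

lemma le_of_integral_le_integral (hcont : Continuous q) (hq0 : ∀ x, 0 < q x) {a b b' : ℝ}
    (h : ∫ x in a..b, q x ≤ ∫ x in a..b', q x) : b ≤ b' := by
  by_contra! hlt
  have hpos : 0 < ∫ x in b'..b, q x :=
    intervalIntegral.intervalIntegral_pos_of_pos (hcont.intervalIntegrable _ _) hq0 hlt
  rw [← intervalIntegral.integral_add_adjacent_intervals (hcont.intervalIntegrable a b')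
    (hcont.intervalIntegrable b' b)] at h
  linarith

lemma add_nonneg_of_integral_symm_eq (hcont : Continuous q) (hq0 : ∀ x, 0 < q x) {r a b : ℝ}
    (ha : -r ≤ a) (h : ∫ x in (-r)..r, q x = ∫ x in a..b, q x) : 0 ≤ a + b := by
  have hrb : r ≤ b := by
    refine le_of_integral_le_integral hcont hq0 (a := -r) ?_
    rw [h, ← intervalIntegral.integral_add_adjacent_intervals (hcont.intervalIntegrable (-r) a)
      (hcont.intervalIntegrable a b)]
    exact le_add_of_nonneg_left (intervalIntegral.integral_nonneg ha fun x _ => (hq0 x).le)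
  linarith

end Sliding

theorem stmt_2_general (q : ℝ → ℝ) (hq : Continuous q) (hqpos : ∀ x, 0 < q x)
    (hqeven : ∀ x, q (-x) = q x) (hqanti : AntitoneOn q (Ici 0)) (d : ℝ) (hd : 0 < d)
    (abar : ℝ) (habar : (∫ t in (-abar)..abar, q t) = d) (b : ℝ → ℝ)
    (hb : ∀ a : ℝ, ENNReal.ofReal d < (∫⁻ t in Ioi a, ENNReal.ofReal (q t)) →
      (∫ t in a..(b a), q t) = d) :
    (∀ a₁ a₂ : ℝ, -abar ≤ a₁ → a₁ ≤ a₂ →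
      ENNReal.ofReal d < (∫⁻ t in Ioi a₂, ENNReal.ofReal (q t)) →
      neumannMu1 q a₂ (b a₂) ≤ neumannMu1 q a₁ (b a₁)) ∧
    (∀ a₁ a₂ : ℝ, -abar ≤ a₁ → a₁ < a₂ →
      ENNReal.ofReal d < (∫⁻ t in Ioi a₂, ENNReal.ofReal (q t)) →
      (¬ ∃ C : ℝ, ∀ x ∈ Ioo a₁ (b a₁), q x = C) →
      neumannMu1 q a₂ (b a₂) < neumannMu1 q a₁ (b a₁)) := by
  have hlt : ∀ a, ∫ t in a..(b a), q t = d → a < b a := fun a h =>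
    ((intervalIntegral.integral_pos_iff_support_of_nonneg_ae (.of_forall fun x => (hqpos x).le)
      (hq.intervalIntegrable _ _)).1 (h ▸ hd)).1
  have hpair : ∀ a₁ a₂, -abar ≤ a₁ → a₁ ≤ a₂ →
      ENNReal.ofReal d < (∫⁻ t in Ioi a₂, ENNReal.ofReal (q t)) →
      a₁ < b a₁ ∧ a₂ < b a₂ ∧ 0 ≤ a₁ + b a₁ ∧
        ∫ t in a₁..(b a₁), q t = ∫ t in a₂..(b a₂), q t := fun a₁ a₂ h₁ ha h₂ => by
    have hmass₁ := hb a₁ (h₂.trans_le (lintegral_mono_set (Ioi_subset_Ioi ha)))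
    have hmass₂ := hb a₂ h₂
    exact ⟨hlt a₁ hmass₁, hlt a₂ hmass₂,
      add_nonneg_of_integral_symm_eq hq hqpos h₁ (habar.trans hmass₁.symm),
      hmass₁.trans hmass₂.symm⟩
  constructor
  · intro a₁ a₂ h₁ ha h₂
    obtain ⟨hab₁, hab₂, hcenter, hmass⟩ := hpair a₁ a₂ h₁ ha h₂
    exact neumannMu1_le_of_integral_eq_s2 hq hqpos hqeven hqanti hab₁ hab₂ ha hcenter hmass
  · intro a₁ a₂ h₁ ha h₂
    obtain ⟨hab₁, hab₂, hcenter, hmass⟩ := hpair a₁ a₂ h₁ ha.le h₂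
    exact neumannMu1_lt_of_integral_eq_s2 hq hqpos hqeven hqanti hab₁ hab₂ ha hcenter hmass

/-- Theorem 1.1 (ii)-(iii), decreasing case: if `q` is a positive, even `C²` weight
with `q' ≤ 0` on `[0,∞)`, `d ∈ (0, c)` where `c = ∫_ℝ q`, `ā > 0` satisfies
`∫_{-ā}^{ā} q = d`, and `b(a)` is the unique real with `∫_a^{b(a)} q = d`
(defined whenever `∫_a^∞ q > d`, i.e. `a < a₊`), then `a ↦ μ₁((a,b(a));q)` is
nonincreasing on `[-ā, a₊)`, and strictly decreasing from any `a₁ ∈ (-ā, a₊)`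
on whose interval `(a₁, b(a₁))` the weight `q` is not constant. -/
theorem stmt_2 (q : ℝ → ℝ) (hq : ContDiff ℝ 2 q) (hqpos : ∀ x, 0 < q x)
    (hqeven : ∀ x, q (-x) = q x) (hq' : ∀ x, 0 ≤ x → deriv q x ≤ 0)
    (d : ℝ) (hd : 0 < d)
    (hdc : ENNReal.ofReal d < ∫⁻ t, ENNReal.ofReal (q t))
    (abar : ℝ) (habar : 0 < abar) (habar2 : (∫ t in (-abar)..abar, q t) = d)
    (b : ℝ → ℝ)
    (hb : ∀ a : ℝ, ENNReal.ofReal d < (∫⁻ t in Set.Ioi a, ENNReal.ofReal (q t)) →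
      (∫ t in a..(b a), q t) = d) :
    (∀ a₁ a₂ : ℝ, -abar ≤ a₁ → a₁ ≤ a₂ →
      ENNReal.ofReal d < (∫⁻ t in Set.Ioi a₂, ENNReal.ofReal (q t)) →
      neumannMu1 q a₂ (b a₂) ≤ neumannMu1 q a₁ (b a₁)) ∧
    (∀ a₁ a₂ : ℝ, -abar < a₁ → a₁ < a₂ →
      ENNReal.ofReal d < (∫⁻ t in Set.Ioi a₂, ENNReal.ofReal (q t)) →
      (¬ ∃ C : ℝ, ∀ x ∈ Set.Ioo a₁ (b a₁), q x = C) →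
      neumannMu1 q a₂ (b a₂) < neumannMu1 q a₁ (b a₁)) := by
  have hanti : AntitoneOn q (Ici 0) :=
    antitoneOn_of_deriv_nonpos (convex_Ici 0) hq.continuous.continuousOn
      (hq.differentiable two_ne_zero).differentiableOn fun x hx => hq' x (interior_subset hx)
  have h := stmt_2_general q hq.continuous hqpos hqeven hanti d hd abar habar2 b hb
  exact ⟨h.1, fun a₁ a₂ h₁ => h.2 a₁ a₂ h₁.le⟩
end
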